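/- Let λ_1 < … < λ_s be positive integers linearly independent over non-negative integers and let f(t) = (t^{λ_1},…,t^{λ_s}) be the corresponding curve-germ (ℝ,0)→(ℝ^s,0). Let ω_1 and ω_2 be germs at 0 of smooth differential k-forms on ℝ^s whose algebraic restrictions to f are diffeomorphic, i.e. there exist germs of diffeomorphisms Φ:(ℝ^s,0)→(ℝ^s,0) and φ:(ℝ,0)→(ℝ,0) with Φ∘f = f∘φ near 0 such that the pullback Φ^*ω_1 and ω_2 have the same algebraic restriction to f. Suppose r_1 (respectively r_2) is the least non-negative integer such that the quasi-homogeneous part ω_1^{(r_1)} (respectively ω_2^{(r_2)}) does not have zero algebraic restriction to f. Then r_1 = r_2, and there exists a non-zero real number c (namely c = (φ'(0))^{r_1}) such that ω_2^{(r_1)} and c·ω_1^{(r_1)} have the same algebraic restriction to f. -/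

import Mathlib

open Filter Topology

noncomputable section

/-- A germ of diffeomorphism of `(ℝ,0)`. -/
def IsDiffeoGerm1 (φ : ℝ → ℝ) : Prop :=
  φ 0 = 0 ∧ (∃ U ∈ 𝓝 (0 : ℝ), ContDiffOn ℝ (⊤ : ℕ∞) φ U) ∧ deriv φ 0 ≠ 0

/-- A germ of diffeomorphism of `(ℝ^s,0)`. -/
def IsDiffeoGerm (s : ℕ) (Φ : (Fin s → ℝ) → (Fin s → ℝ)) : Prop :=
  Φ 0 = 0 ∧ (∃ U ∈ 𝓝 (0 : Fin s → ℝ), ContDiffOn ℝ (⊤ : ℕ∞) Φ U) ∧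
    ∃ D : (Fin s → ℝ) ≃L[ℝ] (Fin s → ℝ),
      HasFDerivAt Φ (D : (Fin s → ℝ) →L[ℝ] (Fin s → ℝ)) 0

/-- Positive integers `λ 0, …, λ (s-1)` are linearly independent over non-negative
integers: no `λ j` is a `ℕ`-linear combination of the others. -/
def LinIndepNonneg {s : ℕ} (lam : Fin s → ℕ) : Prop :=
  ∀ j : Fin s, ∀ c : Fin s → ℕ, lam j ≠ ∑ i ∈ Finset.univ.erase j, c i * lam i

/-- A (set-theoretic) differential `k`-form on `ℝ^s`. -/
def FormK (s k : ℕ) := (Fin s → ℝ) → ((Fin k → Fin s → ℝ) → ℝ)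

/-- A germ at `0` of a smooth differential `k`-form: pointwise multilinear and
alternating in the tangent vectors, with coefficients smooth near `0`. -/
def IsFormK (s k : ℕ) (ω : FormK s k) : Prop :=
  (∀ (x : Fin s → ℝ) (v : Fin k → Fin s → ℝ) (i : Fin k) (a b : Fin s → ℝ) (c : ℝ),
      ω x (Function.update v i (a + c • b))
        = ω x (Function.update v i a) + c * ω x (Function.update v i b)) ∧
  (∀ (x : Fin s → ℝ) (v : Fin k → Fin s → ℝ),
      (∃ i j, i ≠ j ∧ v i = v j) → ω x v = 0) ∧
  (∀ v : Fin k → Fin s → ℝ,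
      ∃ U ∈ 𝓝 (0 : Fin s → ℝ), ContDiffOn ℝ (⊤ : ℕ∞) (fun x => ω x v) U)

/-- The exterior derivative of a `k`-form, evaluated on a `(k+1)`-tuple of (constant)
vectors:
`dω(x)(v₀,…,v_k) = ∑ i (−1)^i (Dω(x)(v i))(v₀,…,v̂ᵢ,…,v_k)`. -/
def extDK (s k : ℕ) (β : FormK s k) : FormK s (k+1) :=
  fun x v => ∑ i : Fin (k+1),
    (-1 : ℝ) ^ (i : ℕ) *
      fderiv ℝ (fun y => β y (fun j => v (i.succAbove j))) x (v i)

/-- A `k`-form vanishes on the image of a curve-germ. -/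
def VanishesK (s k : ℕ) (ω : FormK s k) (f : ℝ → Fin s → ℝ) : Prop :=
  ∀ᶠ t in 𝓝 (0 : ℝ), ∀ v, ω (f t) v = 0

/-- A `(k+1)`-form `ω` has zero algebraic restriction to the curve-germ `f` if
`ω = α + dβ` near `0` for a smooth `(k+1)`-form `α` and a smooth `k`-form `β`, both
vanishing on `im f`. -/
def ZeroARK (s k : ℕ) (ω : FormK s (k+1)) (f : ℝ → Fin s → ℝ) : Prop :=
  ∃ (α : FormK s (k+1)) (β : FormK s k), IsFormK s (k+1) α ∧ IsFormK s k β ∧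
    VanishesK s (k+1) α f ∧ VanishesK s k β f ∧
    ∀ᶠ x in 𝓝 (0 : Fin s → ℝ), ∀ v, ω x v = α x v + extDK s k β x v

/-- Two `(k+1)`-forms have the same algebraic restriction to `f` if their difference
has zero algebraic restriction to `f`. -/
def SameARK (s k : ℕ) (ω₁ ω₂ : FormK s (k+1)) (f : ℝ → Fin s → ℝ) : Prop :=
  ZeroARK s k (fun x v => ω₁ x v - ω₂ x v) f

/-- The pullback of a `k`-form by a (germ of) smooth map. -/
def pullK (s k : ℕ) (Φ : (Fin s → ℝ) → (Fin s → ℝ)) (ω : FormK s k) : FormK s k :=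
  fun x v => ω (Φ x) (fun j => fderiv ℝ Φ x (v j))

/-- Partial derivative in the `i`-th coordinate direction. -/
def pd (s : ℕ) (i : Fin s) (h : (Fin s → ℝ) → ℝ) : (Fin s → ℝ) → ℝ :=
  fun x => fderiv ℝ h x (Pi.single i 1)

/-- Iterated partial derivative `∂^α` for a multi-index `α`. -/
def mderiv (s : ℕ) (α : Fin s → ℕ) (h : (Fin s → ℝ) → ℝ) : (Fin s → ℝ) → ℝ :=
  (List.finRange s).foldr (fun i acc => (pd s i)^[α i] acc) h

/-- The Taylor term of `h` at `0` for the multi-index `α`: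
`(∂^α h(0)/α!) · x^α`. -/
def taylorTerm (s : ℕ) (α : Fin s → ℕ) (h : (Fin s → ℝ) → ℝ) (x : Fin s → ℝ) : ℝ :=
  (mderiv s α h 0 / ∏ i, (Nat.factorial (α i) : ℝ)) * ∏ i, x i ^ α i

open scoped Classical in
/-- The quasi-homogeneous part of quasi-degree `r` of a `k`-form `ω`, with respect to
the weights `lam`:  `ω^{(r)} = ∑_{i₁<…<i_k} P_{I,r} · dx_{i₁}∧…∧dx_{i_k}`, where
`P_{I,r}` is the sum of the Taylor terms of the coefficient `ω(·)(e_{i₁},…,e_{i_k})`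
over multi-indices `α` with `∑ α_l·λ_l = r − (λ_{i₁}+…+λ_{i_k})`. -/
def qhPartK (s k : ℕ) (lam : Fin s → ℕ) (r : ℕ) (ω : FormK s k) : FormK s k :=
  fun x v =>
    ∑ I : Fin k → Fin s,
      if StrictMono I then
        (∑ᶠ α : Fin s → ℕ,
          if (∑ l, α l * lam l) + (∑ j, lam (I j)) = r then
            taylorTerm s α (fun y => ω y (fun j => Pi.single (I j) (1 : ℝ))) x
          else 0)
          * Matrix.det (Matrix.of fun a b : Fin k => v a (I b))
      else 0

/-
Let `δ_τ x = (τ ^ λᵢ xᵢ)ᵢ`. The part of quasi-degree `n` of a form is the coefficient of `τ ^ n`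
in the Taylor series of its pullback by `δ_τ`, and `δ_τ ∘ f = f ∘ (τ ·)`, so every
quasi-homogeneous part of a form of zero restriction has zero restriction. Comparing `Φᵢ(f(t))` with
`φ(t) ^ λᵢ = (φ'(0) t) ^ λᵢ + ⋯` shows that along `f` the terms of weight at most `λᵢ` in `Φᵢ` sum
to `φ'(0) ^ λᵢ xᵢ`. Maps that agree along `f` pull a form back to forms of the same restriction,
so these terms may be replaced by `φ'(0) ^ λᵢ xᵢ`; the resulting map `L` satisfies
`δ_τ⁻¹ ∘ L ∘ δ_τ → δ_{φ'(0)}` as `τ → 0`. Hence, for a form `η` without terms of quasi-degree less than `r`,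
the part of quasi-degree `r` of `L^*η` is `φ'(0) ^ r η^(r)`. Subtracting from `ω₁` its parts of
quasi-degree less than `r₁`, which have zero restriction, puts it in this shape.
-/

open scoped ContDiff

section SmoothGerms

variable {E F G H : Type*} [NormedAddCommGroup E] [NormedSpace ℝ E]
  [NormedAddCommGroup F] [NormedSpace ℝ F] [NormedAddCommGroup G] [NormedSpace ℝ G]
  [NormedAddCommGroup H] [NormedSpace ℝ H]

/-- The germ of `g` at `x` is smooth. Pointwise `ContDiffAt ℝ ∞ g x` would allow the neighbourhood
of differentiability to shrink with the order, hence the `∀ᶠ`. -/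
def SmoothNear (g : E → F) (x : E) : Prop :=
  ∀ᶠ y in 𝓝 x, ContDiffAt ℝ ∞ g y

theorem smoothNear_iff_exists_contDiffOn {g : E → F} {x : E} :
    SmoothNear g x ↔ ∃ U ∈ 𝓝 x, ContDiffOn ℝ ∞ g U := by
  refine ⟨fun h => ⟨_, h, fun _ hy => ContDiffAt.contDiffWithinAt hy⟩, ?_⟩
  rintro ⟨U, hU, h⟩
  filter_upwards [eventually_mem_nhds_iff.2 hU] with y hy using h.contDiffAt hy

theorem SmoothNear.of_contDiff {g : E → F} (h : ContDiff ℝ ∞ g) (x : E) : SmoothNear g x :=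
  Eventually.of_forall fun _ => h.contDiffAt

namespace SmoothNear

variable {x : E}

theorem const (c : F) : SmoothNear (fun _ : E => c) x :=
  of_contDiff contDiff_const x

theorem congr {g g' : E → F} (h : SmoothNear g x) (e : g' =ᶠ[𝓝 x] g) : SmoothNear g' x := by
  filter_upwards [h, e.eventuallyEq_nhds] with y hy ey using hy.congr_of_eventuallyEq ey

theorem comp {g : F → G} {f : E → F} (hg : SmoothNear g (f x)) (hf : SmoothNear f x) :
    SmoothNear (fun y => g (f y)) x := by
  filter_upwards [hf, hf.self_of_nhds.continuousAt.eventually hg] with y hfy hgy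
  exact hgy.comp y hfy

theorem add {g g' : E → F} (h : SmoothNear g x) (h' : SmoothNear g' x) :
    SmoothNear (fun y => g y + g' y) x := by
  filter_upwards [h, h'] with y hy hy' using hy.add hy'

theorem sub {g g' : E → F} (h : SmoothNear g x) (h' : SmoothNear g' x) :
    SmoothNear (fun y => g y - g' y) x := by
  filter_upwards [h, h'] with y hy hy' using hy.sub hy'

theorem smul {g : E → ℝ} {g' : E → F} (h : SmoothNear g x) (h' : SmoothNear g' x) :
    SmoothNear (fun y => g y • g' y) x := by
  filter_upwards [h, h'] with y hy hy' using hy.smul hy'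

theorem const_smul {g : E → F} (h : SmoothNear g x) (c : ℝ) : SmoothNear (fun y => c • g y) x :=
  (const c).smul h

theorem mul {g g' : E → ℝ} (h : SmoothNear g x) (h' : SmoothNear g' x) :
    SmoothNear (fun y => g y * g' y) x :=
  h.smul h'

theorem sum {ι : Type*} {t : Finset ι} {g : ι → E → F} (h : ∀ i ∈ t, SmoothNear (g i) x) :
    SmoothNear (fun y => ∑ i ∈ t, g i y) x := by
  filter_upwards [(eventually_all_finset t).2 h] with y hy using ContDiffAt.sum hy

theorem prod {ι : Type*} {t : Finset ι} {g : ι → E → ℝ} (h : ∀ i ∈ t, SmoothNear (g i) x) :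
    SmoothNear (fun y => ∏ i ∈ t, g i y) x := by
  filter_upwards [(eventually_all_finset t).2 h] with y hy using contDiffAt_prod hy

theorem pi {ι : Type*} [Fintype ι] {g : E → ι → F} (h : ∀ i, SmoothNear (fun y => g y i) x) :
    SmoothNear g x := by
  filter_upwards [eventually_all.2 h] with y hy using contDiffAt_pi.2 hy

theorem pi_apply {ι : Type*} [Fintype ι] {g : E → ι → F} (h : SmoothNear g x) (i : ι) :
    SmoothNear (fun y => g y i) x := by
  filter_upwards [h] with y hy using contDiffAt_pi.1 hy i

theorem det {n : Type*} [Fintype n] [DecidableEq n] {A : E → Matrix n n ℝ}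
    (h : ∀ a b, SmoothNear (fun y => A y a b) x) : SmoothNear (fun y => (A y).det) x := by
  simp only [Matrix.det_apply']
  exact sum fun σ _ => (const _).mul (prod fun i _ => h _ _)

theorem eventually_differentiableAt {g : E → F} (h : SmoothNear g x) :
    ∀ᶠ y in 𝓝 x, DifferentiableAt ℝ g y :=
  h.mono fun _ hy => hy.differentiableAt (by simp)

theorem differentiableAt {g : E → F} (h : SmoothNear g x) : DifferentiableAt ℝ g x :=
  h.eventually_differentiableAt.self_of_nhds

theorem continuousAt {g : E → F} (h : SmoothNear g x) : ContinuousAt g x :=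
  h.differentiableAt.continuousAt

protected theorem fderiv {g : E → F} (h : SmoothNear g x) : SmoothNear (fderiv ℝ g) x := by
  filter_upwards [h] with y hy using hy.fderiv_right (by simp)

theorem clm_comp {A : E → F →L[ℝ] G} {B : E → H →L[ℝ] F} (hA : SmoothNear A x)
    (hB : SmoothNear B x) : SmoothNear (fun y => (A y).comp (B y)) x := by
  filter_upwards [hA, hB] with y hAy hBy using hAy.clm_comp hBy

theorem clm_apply {A : E → F →L[ℝ] G} {g : E → F} (hA : SmoothNear A x) (hg : SmoothNear g x) :
    SmoothNear (fun y => A y (g y)) x := by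
  filter_upwards [hA, hg] with y hAy hgy using hAy.clm_apply hgy

end SmoothNear

/-- The derivative of `g` in the direction of the constant vector field `v`. -/
def dirDeriv (v : E) (g : E → F) : E → F := fun x => fderiv ℝ g x v

variable {x : E} {g g' : E → F}

protected theorem SmoothNear.dirDeriv (h : SmoothNear g x) (v : E) : SmoothNear (dirDeriv v g) x :=
  h.fderiv.clm_apply (.const v)

theorem SmoothNear.iterate_dirDeriv (h : SmoothNear g x) (v : E) (n : ℕ) :
    SmoothNear ((dirDeriv v)^[n] g) x := by
  induction n generalizing g with
  | zero => exact h
  | succ _ ih => exact ih (h.dirDeriv v)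

theorem dirDeriv_congr (v : E) (e : g =ᶠ[𝓝 x] g') : dirDeriv v g =ᶠ[𝓝 x] dirDeriv v g' := by
  filter_upwards [e.eventuallyEq_nhds] with y hy
  simp only [dirDeriv, hy.fderiv_eq]

theorem iterate_dirDeriv_congr (v : E) (n : ℕ) (e : g =ᶠ[𝓝 x] g') :
    (dirDeriv v)^[n] g =ᶠ[𝓝 x] (dirDeriv v)^[n] g' := by
  induction n generalizing g g' with
  | zero => exact e
  | succ _ ih => exact ih (dirDeriv_congr v e)

theorem dirDeriv_comm (h : SmoothNear g x) (u v : E) :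
    dirDeriv u (dirDeriv v g) =ᶠ[𝓝 x] dirDeriv v (dirDeriv u g) := by
  filter_upwards [h] with y hy
  have hsymm : IsSymmSndFDerivAt ℝ g y := hy.isSymmSndFDerivAt <| by
    simp only [minSmoothness_of_isRCLikeNormedField]
    exact WithTop.coe_le_coe.2 le_top
  have hdiff : DifferentiableAt ℝ (fderiv ℝ g) y :=
    (hy.fderiv_right (m := ∞) (by simp)).differentiableAt (by simp)
  have second (w z : E) : dirDeriv z (dirDeriv w g) y = fderiv ℝ (fderiv ℝ g) y z w := by
    change fderiv ℝ (fun p => fderiv ℝ g p w) y z = _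
    rw [fderiv_clm_apply hdiff (differentiableAt_const _)]
    simp
  rw [second, second, hsymm.eq]

theorem dirDeriv_iterate_comm (h : SmoothNear g x) (u v : E) (n : ℕ) :
    dirDeriv u ((dirDeriv v)^[n] g) =ᶠ[𝓝 x] (dirDeriv v)^[n] (dirDeriv u g) := by
  induction n generalizing g with
  | zero => rfl
  | succ n ih => exact (ih (h.dirDeriv v)).trans (iterate_dirDeriv_congr v n (dirDeriv_comm h u v))

end SmoothGerms

section TaylorCoefficients

variable {F G : Type*} [NormedAddCommGroup F] [NormedSpace ℝ F]
  [NormedAddCommGroup G] [NormedSpace ℝ G] {g g' : ℝ → F}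

/-- The coefficient of `t ^ n` in the Taylor series of `g` at `0`. -/
def taylorCoeff (n : ℕ) (g : ℝ → F) : F := (n.factorial : ℝ)⁻¹ • iteratedDeriv n g 0

theorem taylorCoeff_zero (g : ℝ → F) : taylorCoeff 0 g = g 0 := by
  simp [taylorCoeff]

theorem taylorCoeff_succ (n : ℕ) (g : ℝ → F) :
    taylorCoeff (n + 1) g = ((n : ℝ) + 1)⁻¹ • taylorCoeff n (deriv g) := by
  rw [taylorCoeff, taylorCoeff, iteratedDeriv_succ', Nat.factorial_succ, Nat.cast_mul, mul_inv,
    mul_smul, Nat.cast_succ]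

theorem taylorCoeff_congr (n : ℕ) (e : g =ᶠ[𝓝 0] g') : taylorCoeff n g = taylorCoeff n g' := by
  rw [taylorCoeff, taylorCoeff, e.iteratedDeriv_eq]

theorem taylorCoeff_eq_zero (n : ℕ) (e : ∀ᶠ t in 𝓝 0, g t = 0) : taylorCoeff n g = 0 := by
  rw [taylorCoeff_congr n (g' := fun _ => 0) e]
  simp [taylorCoeff]

theorem SmoothNear.contDiffAt_nat (h : SmoothNear g 0) (n : ℕ) : ContDiffAt ℝ n g 0 :=
  h.self_of_nhds.of_le (WithTop.coe_le_coe.2 le_top)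

theorem taylorCoeff_add (n : ℕ) (h : SmoothNear g 0) (h' : SmoothNear g' 0) :
    taylorCoeff n (fun t => g t + g' t) = taylorCoeff n g + taylorCoeff n g' := by
  simp only [taylorCoeff, iteratedDeriv_fun_add (h.contDiffAt_nat n) (h'.contDiffAt_nat n),
    smul_add]

theorem taylorCoeff_sub (n : ℕ) (h : SmoothNear g 0) (h' : SmoothNear g' 0) :
    taylorCoeff n (fun t => g t - g' t) = taylorCoeff n g - taylorCoeff n g' := by
  simp only [taylorCoeff, iteratedDeriv_fun_sub (h.contDiffAt_nat n) (h'.contDiffAt_nat n),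
    smul_sub]

theorem taylorCoeff_const_smul (n : ℕ) (c : ℝ) (g : ℝ → F) :
    taylorCoeff n (fun t => c • g t) = c • taylorCoeff n g := by
  rw [taylorCoeff, iteratedDeriv_fun_const_smul_field, taylorCoeff, smul_comm]

theorem taylorCoeff_sum {ι : Type*} (n : ℕ) {t : Finset ι} {g : ι → ℝ → F}
    (h : ∀ i ∈ t, SmoothNear (g i) 0) :
    taylorCoeff n (fun τ => ∑ i ∈ t, g i τ) = ∑ i ∈ t, taylorCoeff n (g i) := by
  simp only [taylorCoeff, iteratedDeriv_fun_sum fun i hi => (h i hi).contDiffAt_nat n,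
    Finset.smul_sum]

theorem taylorCoeff_clm_comp (n : ℕ) (L : F →L[ℝ] G) (h : SmoothNear g 0) :
    taylorCoeff n (fun t => L (g t)) = L (taylorCoeff n g) := by
  induction n generalizing g with
  | zero => simp only [taylorCoeff_zero]
  | succ n ih =>
    have chain : deriv (fun t => L (g t)) =ᶠ[𝓝 0] fun t => L (deriv g t) := by
      filter_upwards [h.eventually_differentiableAt] with t ht
      exact (L.hasFDerivAt.comp_hasDerivAt t ht.hasDerivAt).deriv
    rw [taylorCoeff_succ, taylorCoeff_congr n chain, taylorCoeff_succ, map_smul]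
    exact congrArg _ (ih (h.dirDeriv 1))

theorem taylorCoeff_pow_smul (n m : ℕ) (h : SmoothNear g 0) :
    taylorCoeff n (fun t => t ^ m • g t) = if m ≤ n then taylorCoeff (n - m) g else 0 := by
  have leibniz := iteratedDerivWithin_smul (f := fun t : ℝ => t ^ m) (Set.mem_univ 0)
    uniqueDiffOn_univ (by fun_prop) (h.contDiffAt_nat n).contDiffWithinAt
  simp only [iteratedDerivWithin_univ, iteratedDeriv_fun_pow_zero] at leibniz
  rw [taylorCoeff, ← Pi.smul_def', leibniz]
  simp only [Nat.cast_ite, Nat.cast_zero, ite_smul, zero_smul, smul_ite, smul_zero,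
    Finset.sum_ite_eq', Finset.mem_range, Order.lt_add_one_iff]
  split_ifs with hm
  · have hfact := congrArg (Nat.cast (R := ℝ)) (Nat.choose_mul_factorial_mul_factorial hm)
    push_cast at hfact
    rw [taylorCoeff, ← Nat.cast_smul_eq_nsmul ℝ, smul_smul, smul_smul, ← hfact]
    congr 1
    have hm' : (m.factorial : ℝ) ≠ 0 := by positivity
    have hchoose : (n.choose m : ℝ) ≠ 0 := by exact_mod_cast (Nat.choose_pos hm).ne'
    field_simp
  · rfl

theorem taylorCoeff_pow_smul_const (n m : ℕ) (c : F) :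
    taylorCoeff n (fun t => t ^ m • c) = if n = m then c else 0 := by
  rw [taylorCoeff, iteratedDeriv_smul_const (by fun_prop), iteratedDeriv_fun_pow_zero]
  split_ifs with h
  · rw [h, inv_smul_smul₀ (by positivity)]
  · simp

theorem taylorCoeff_comp_mul_left (n : ℕ) (a : ℝ) (g : ℝ → F) :
    taylorCoeff n (fun t => g (a * t)) = a ^ n • taylorCoeff n g := by
  induction n generalizing g with
  | zero => simp [taylorCoeff_zero]
  | succ n ih =>
    have chain : deriv (fun t => g (a * t)) = fun t => a • deriv g (a * t) :=
      funext fun t => deriv_comp_mul_left a g t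
    rw [taylorCoeff_succ, chain, taylorCoeff_const_smul, ih, taylorCoeff_succ]
    module

end TaylorCoefficients

section TaylorCoefficientsWithParameter

variable {E F : Type*} [NormedAddCommGroup E] [NormedSpace ℝ E] [NormedAddCommGroup F]
  [NormedSpace ℝ F] {G : ℝ × E → F} {x : E}

theorem eventually_hasDerivAt_slice (h : SmoothNear G (0, x)) :
    ∀ᶠ p in 𝓝 ((0 : ℝ), x), HasDerivAt (fun τ => G (τ, p.2)) (dirDeriv (1, 0) G p) p.1 := by
  filter_upwards [h.eventually_differentiableAt] with p hp
  exact hp.hasFDerivAt.comp_hasDerivAt p.1 ((hasDerivAt_id p.1).prodMk (hasDerivAt_const p.1 p.2))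

theorem SmoothNear.slice (h : SmoothNear G (0, x)) : SmoothNear (fun τ => G (τ, x)) 0 :=
  SmoothNear.comp h (.of_contDiff (contDiff_prodMk_left x) 0)

theorem SmoothNear.eventually_prodMk (h : SmoothNear G (0, x)) :
    ∀ᶠ y in 𝓝 x, SmoothNear G (0, y) :=
  (Continuous.prodMk_right (0 : ℝ)).continuousAt.eventually (eventually_eventually_nhds.2 h)

theorem taylorCoeff_succ_slice (n : ℕ) (h : SmoothNear G (0, x)) :
    taylorCoeff (n + 1) (fun τ => G (τ, x))
      = ((n : ℝ) + 1)⁻¹ • taylorCoeff n fun τ => dirDeriv (1, 0) G (τ, x) := by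
  rw [taylorCoeff_succ]
  congr 1
  refine taylorCoeff_congr n ?_
  filter_upwards [(Continuous.prodMk_left x).continuousAt.eventually
    (eventually_hasDerivAt_slice h)] with τ hτ using hτ.deriv

theorem taylorCoeff_succ_slice_eventuallyEq (n : ℕ) (h : SmoothNear G (0, x)) :
    (fun y => taylorCoeff (n + 1) fun τ => G (τ, y)) =ᶠ[𝓝 x]
      fun y => ((n : ℝ) + 1)⁻¹ • taylorCoeff n fun τ => dirDeriv (1, 0) G (τ, y) := by
  filter_upwards [h.eventually_prodMk] with y hy using taylorCoeff_succ_slice n hy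

theorem SmoothNear.taylorCoeff_slice (n : ℕ) (h : SmoothNear G (0, x)) :
    SmoothNear (fun y => taylorCoeff n fun τ => G (τ, y)) x := by
  induction n generalizing G with
  | zero =>
    simp only [taylorCoeff_zero]
    exact SmoothNear.comp h (.of_contDiff (contDiff_prodMk_right (0 : ℝ)) x)
  | succ n ih =>
    exact ((ih (h.dirDeriv (1, 0))).const_smul _).congr (taylorCoeff_succ_slice_eventuallyEq n h)

theorem dirDeriv_taylorCoeff_slice (n : ℕ) (h : SmoothNear G (0, x)) (v : E) :
    dirDeriv v (fun y => taylorCoeff n fun τ => G (τ, y)) x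
      = taylorCoeff n fun τ => dirDeriv (0, v) G (τ, x) := by
  induction n generalizing G with
  | zero =>
    simp only [taylorCoeff_zero]
    have hG : HasFDerivAt G _ (0, x) := h.differentiableAt.hasFDerivAt
    have hslice : HasFDerivAt (fun y => G (0, y)) _ x := hG.comp x (hasFDerivAt_prodMk_right 0 x)
    simp [dirDeriv, hslice.fderiv]
  | succ n ih =>
    have h' := h.dirDeriv (1, 0)
    have comm : (fun τ => dirDeriv (0, v) (dirDeriv (1, 0) G) (τ, x)) =ᶠ[𝓝 0]
        fun τ => dirDeriv (1, 0) (dirDeriv (0, v) G) (τ, x) :=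
      (Continuous.prodMk_left x).continuousAt.eventually (dirDeriv_comm h (0, v) (1, 0))
    rw [(dirDeriv_congr v (taylorCoeff_succ_slice_eventuallyEq n h)).self_of_nhds, dirDeriv,
      fderiv_fun_const_smul (h'.taylorCoeff_slice n).differentiableAt, smul_apply,
      taylorCoeff_succ_slice n (h.dirDeriv (0, v)), ← taylorCoeff_congr n comm, ← ih h', dirDeriv]

theorem fderiv_slice_eventuallyEq (h : SmoothNear G (0, x)) :
    (fun τ => fderiv ℝ (fun y => G (τ, y)) x) =ᶠ[𝓝 0]
      fun τ => (fderiv ℝ G (τ, x)).comp (.inr ℝ ℝ E) := by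
  filter_upwards [(Continuous.prodMk_left x).continuousAt.eventually
    h.eventually_differentiableAt] with τ hτ
  exact (hτ.hasFDerivAt.comp x (hasFDerivAt_prodMk_right τ x)).fderiv

theorem SmoothNear.fderiv_slice (h : SmoothNear G (0, x)) :
    SmoothNear (fun τ => fderiv ℝ (fun y => G (τ, y)) x) 0 :=
  (h.fderiv.clm_comp (.const (.inr ℝ ℝ E))).slice.congr (fderiv_slice_eventuallyEq h)

theorem fderiv_taylorCoeff_slice (n : ℕ) (h : SmoothNear G (0, x)) :
    fderiv ℝ (fun y => taylorCoeff n fun τ => G (τ, y)) x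
      = taylorCoeff n fun τ => fderiv ℝ (fun y => G (τ, y)) x := by
  ext v
  rw [taylorCoeff_congr n (fderiv_slice_eventuallyEq h)]
  exact (dirDeriv_taylorCoeff_slice n h v).trans (taylorCoeff_clm_comp n
    (ContinuousLinearMap.apply ℝ F v) (h.fderiv_slice.congr (fderiv_slice_eventuallyEq h).symm))

theorem isLittleO_sub_pow_succ_smul_of_dirDeriv {r : ℕ} {c : F} (h : SmoothNear G (0, x))
    (hzero : ∀ᶠ y in 𝓝 x, G (0, y) = 0)
    (hderiv : (fun p : ℝ × E => dirDeriv (1, 0) G p - p.1 ^ r • ((r : ℝ) + 1) • c)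
      =o[𝓝 (0, x)] fun p => p.1 ^ r) :
    (fun p : ℝ × E => G p - p.1 ^ (r + 1) • c) =o[𝓝 (0, x)] fun p => p.1 ^ (r + 1) := by
  refine Asymptotics.isLittleO_iff.2 fun ε hε => ?_
  obtain ⟨δ, hδ, hball⟩ := Metric.eventually_nhds_iff_ball.1 ((eventually_hasDerivAt_slice h).and
    ((hderiv.bound hε).and ((continuous_snd.tendsto _).eventually hzero)))
  filter_upwards [Metric.ball_mem_nhds _ hδ] with p hp
  have hsegment {τ : ℝ} (hτ : τ ∈ Set.uIcc 0 p.1) : ‖τ‖ ≤ ‖p.1‖ := by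
    simpa using Set.abs_sub_left_of_mem_uIcc hτ
  have hmem {τ : ℝ} (hτ : τ ∈ Set.uIcc 0 p.1) : (τ, p.2) ∈ Metric.ball ((0 : ℝ), x) δ := by
    rw [Metric.mem_ball, Prod.dist_eq, max_lt_iff, dist_zero_right] at hp ⊢
    exact ⟨(hsegment hτ).trans_lt hp.1, hp.2⟩
  have hmvt := (convex_uIcc 0 p.1).norm_image_sub_le_of_norm_hasDerivWithin_le
    (f := fun τ => G (τ, p.2) - τ ^ (r + 1) • c) (C := ε * ‖p.1 ^ r‖)
    (fun τ hτ => ((hball _ (hmem hτ)).1.sub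
      ((hasDerivAt_pow (r + 1) τ).smul_const c)).hasDerivWithinAt)
    (fun τ hτ => ?_) Set.left_mem_uIcc Set.right_mem_uIcc
  · simpa [(hball p hp).2.2, pow_succ, mul_assoc] using hmvt
  · calc ‖dirDeriv (1, 0) G (τ, p.2) - ((r + 1 : ℕ) * τ ^ (r + 1 - 1)) • c‖
        = ‖dirDeriv (1, 0) G (τ, p.2) - τ ^ r • ((r : ℝ) + 1) • c‖ := by
          rw [Nat.add_sub_cancel, Nat.cast_succ, mul_comm, mul_smul]
      _ ≤ ε * ‖τ ^ r‖ := (hball _ (hmem hτ)).2.1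
      _ ≤ ε * ‖p.1 ^ r‖ := by
          rw [norm_pow, norm_pow]
          gcongr
          exact hsegment hτ

theorem isLittleO_sub_taylorCoeff_slice (r : ℕ) (h : SmoothNear G (0, x))
    (hlow : ∀ q < r, ∀ᶠ y in 𝓝 x, taylorCoeff q (fun τ => G (τ, y)) = 0) :
    (fun p : ℝ × E => G p - p.1 ^ r • taylorCoeff r (fun τ => G (τ, x)))
      =o[𝓝 (0, x)] fun p => p.1 ^ r := by
  induction r generalizing G with
  | zero =>
    simp only [pow_zero, one_smul, taylorCoeff_zero, Asymptotics.isLittleO_one_iff]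
    simpa using h.continuousAt.tendsto.sub_const (G (0, x))
  | succ r ih =>
    have hcoeff : taylorCoeff r (fun τ => dirDeriv (1, 0) G (τ, x))
        = ((r : ℝ) + 1) • taylorCoeff (r + 1) fun τ => G (τ, x) := by
      rw [taylorCoeff_succ_slice r h, smul_inv_smul₀ (by positivity)]
    refine isLittleO_sub_pow_succ_smul_of_dirDeriv h
      (by simpa only [taylorCoeff_zero] using hlow 0 (by lia)) ?_
    rw [← hcoeff]
    refine ih (h.dirDeriv _) fun q hq => ?_
    filter_upwards [hlow (q + 1) (by lia), taylorCoeff_succ_slice_eventuallyEq q h] with y h₀ h₁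
    rwa [h₁, smul_eq_zero_iff_right (by positivity)] at h₀

theorem tendsto_inv_pow_smul_slice (r : ℕ) (h : SmoothNear G (0, x))
    (hlow : ∀ q < r, ∀ᶠ y in 𝓝 x, taylorCoeff q (fun τ => G (τ, y)) = 0) :
    Tendsto (fun p : ℝ × E => (p.1 ^ r)⁻¹ • G p) (𝓝[≠] 0 ×ˢ 𝓝 x)
      (𝓝 (taylorCoeff r fun τ => G (τ, x))) := by
  have hfilter : 𝓝[≠] (0 : ℝ) ×ˢ 𝓝 x ≤ 𝓝 (0, x) := by
    rw [nhds_prod_eq]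
    exact prod_mono_left _ nhdsWithin_le_nhds
  have hremainder := ((isLittleO_sub_taylorCoeff_slice r h hlow).mono
    hfilter).tendsto_inv_smul_nhds_zero.add_const (taylorCoeff r fun τ => G (τ, x))
  rw [zero_add] at hremainder
  refine hremainder.congr' ?_
  filter_upwards [tendsto_fst.eventually self_mem_nhdsWithin] with p (hp : p.1 ≠ 0)
  rw [smul_sub, inv_smul_smul₀ (pow_ne_zero r hp), sub_add_cancel]

end TaylorCoefficientsWithParameter

section LeadingTaylorCoefficient

variable {F : Type*} [NormedAddCommGroup F] [NormedSpace ℝ F] {g : ℝ → F} {r : ℕ}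

theorem tendsto_inv_pow_smul (h : SmoothNear g 0) (hlow : ∀ q < r, taylorCoeff q g = 0) :
    Tendsto (fun t => (t ^ r)⁻¹ • g t) (𝓝[≠] 0) (𝓝 (taylorCoeff r g)) :=
  (tendsto_inv_pow_smul_slice (x := (0 : ℝ)) r
    (h.comp (f := Prod.fst) (.of_contDiff contDiff_fst _))
    fun q hq => .of_forall fun _ => hlow q hq).comp (tendsto_id.prodMk tendsto_const_nhds)

theorem taylorCoeff_of_tendsto_inv_pow_smul {c : F} (h : SmoothNear g 0)
    (hc : Tendsto (fun t => (t ^ r)⁻¹ • g t) (𝓝[≠] 0) (𝓝 c)) {q : ℕ} (hq : q ≤ r) :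
    taylorCoeff q g = if q = r then c else 0 := by
  induction q using Nat.strong_induction_on with
  | _ q ih =>
    have hlow : ∀ p < q, taylorCoeff p g = 0 := fun p hp => by
      rw [ih p hp (by lia), if_neg (by lia)]
    have hpow : Tendsto (fun t : ℝ => t ^ (r - q)) (𝓝[≠] 0) (𝓝 (0 ^ (r - q))) :=
      ((continuous_pow (r - q)).tendsto 0).mono_left nhdsWithin_le_nhds
    have hrescale : Tendsto (fun t => (t ^ q)⁻¹ • g t) (𝓝[≠] 0) (𝓝 ((0 : ℝ) ^ (r - q) • c)) := by
      refine (hpow.smul hc).congr' ?_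
      filter_upwards [self_mem_nhdsWithin] with t (ht : t ≠ 0)
      rw [smul_smul, pow_sub₀ t ht hq, mul_right_comm, mul_inv_cancel₀ (pow_ne_zero r ht), one_mul]
    rw [tendsto_nhds_unique (tendsto_inv_pow_smul h hlow) hrescale]
    obtain rfl | hqr := hq.eq_or_lt
    · simp
    · simp [hqr.ne, (Nat.sub_pos_of_lt hqr).ne']

theorem tendsto_inv_pow_smul_pow_of_hasDerivAt {φ : ℝ → ℝ} {a : ℝ} (hφ : HasDerivAt φ a 0)
    (h₀ : φ 0 = 0) (m : ℕ) :
    Tendsto (fun t => (t ^ m)⁻¹ • φ t ^ m) (𝓝[≠] 0) (𝓝 (a ^ m)) := by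
  have hslope : Tendsto (fun t => t⁻¹ • φ t) (𝓝[≠] 0) (𝓝 a) := by
    simpa [h₀] using hφ.tendsto_slope_zero
  simpa only [smul_pow, inv_pow] using hslope.pow m

end LeadingTaylorCoefficient

section MultiIndexTaylorCoefficients

variable {s : ℕ} {h : (Fin s → ℝ) → ℝ}

/-- The iterated partial derivative `∂^α` restricted to the directions in the list `l`; with
`l = List.finRange s` it is `mderiv`. -/
def listDeriv (α : Fin s → ℕ) (l : List (Fin s)) (h : (Fin s → ℝ) → ℝ) : (Fin s → ℝ) → ℝ :=
  l.foldr (fun i acc => (pd s i)^[α i] acc) h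

protected theorem SmoothNear.listDeriv (hh : SmoothNear h 0) (α : Fin s → ℕ) (l : List (Fin s)) :
    SmoothNear (listDeriv α l h) 0 := by
  induction l with
  | nil => exact hh
  | cons j l ih => exact ih.iterate_dirDeriv _ _

theorem listDeriv_zero (l : List (Fin s)) (h : (Fin s → ℝ) → ℝ) : listDeriv 0 l h = h := by
  induction l with
  | nil => rfl
  | cons _ _ ih => exact ih

theorem pd_listDeriv (hh : SmoothNear h 0) (i : Fin s) (α : Fin s → ℕ) (l : List (Fin s)) :
    pd s i (listDeriv α l h) =ᶠ[𝓝 0] listDeriv α l (pd s i h) := by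
  induction l with
  | nil => rfl
  | cons j l ih =>
    exact (dirDeriv_iterate_comm (hh.listDeriv α l) _ _ (α j)).trans (iterate_dirDeriv_congr _ _ ih)

theorem listDeriv_add_single_of_notMem {i : Fin s} {l : List (Fin s)} (hi : i ∉ l)
    (α : Fin s → ℕ) (h : (Fin s → ℝ) → ℝ) :
    listDeriv (α + Pi.single i 1) l h = listDeriv α l h := by
  induction l with
  | nil => rfl
  | cons j l ih =>
    simp only [List.mem_cons, not_or] at hi
    obtain ⟨hij, hil⟩ := hi
    have hj : (α + Pi.single i 1 : Fin s → ℕ) j = α j := by simp [Ne.symm hij]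
    change (pd s j)^[_] (listDeriv _ l h) = (pd s j)^[_] (listDeriv _ l h)
    rw [ih hil, hj]

theorem listDeriv_add_single_of_mem (hh : SmoothNear h 0) {i : Fin s} {l : List (Fin s)}
    (hl : l.Nodup) (hi : i ∈ l) (α : Fin s → ℕ) :
    listDeriv (α + Pi.single i 1) l h =ᶠ[𝓝 0] listDeriv α l (pd s i h) := by
  induction l with
  | nil => simp at hi
  | cons j l ih =>
    obtain ⟨hjl, hl⟩ := List.nodup_cons.1 hl
    change (pd s j)^[(α + Pi.single i 1 : Fin s → ℕ) j] (listDeriv (α + Pi.single i 1) l h)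
      =ᶠ[𝓝 0] (pd s j)^[α j] (listDeriv α l (pd s i h))
    obtain rfl | hij := eq_or_ne i j
    · rw [listDeriv_add_single_of_notMem hjl, Pi.add_apply, Pi.single_eq_same,
        Function.iterate_succ_apply]
      exact iterate_dirDeriv_congr _ _ (pd_listDeriv hh i α l)
    · rw [Pi.add_apply, Pi.single_eq_of_ne hij.symm, add_zero]
      exact iterate_dirDeriv_congr _ _ (ih hl (List.mem_of_ne_of_mem hij hi))

theorem mderiv_add_single (hh : SmoothNear h 0) (i : Fin s) (α : Fin s → ℕ) :
    mderiv s (α + Pi.single i 1) h 0 = mderiv s α (pd s i h) 0 :=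
  (listDeriv_add_single_of_mem hh (List.nodup_finRange s) (List.mem_finRange i) α).self_of_nhds

theorem taylorTerm_zero (h : (Fin s → ℝ) → ℝ) (x : Fin s → ℝ) : taylorTerm s 0 h x = h 0 := by
  have hderiv : mderiv s 0 h = h := listDeriv_zero _ h
  simp [taylorTerm, hderiv]

theorem prod_factorial_add_single (α : Fin s → ℕ) (i : Fin s) :
    ∏ j, ((α + Pi.single i 1 : Fin s → ℕ) j).factorial = (α i + 1) * ∏ j, (α j).factorial := by
  rw [Fintype.prod_eq_mul_prod_compl i, Fintype.prod_eq_mul_prod_compl i, ← mul_assoc]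
  congr 1
  · simp [Nat.factorial_succ]
  · refine Finset.prod_congr rfl fun j hj => ?_
    simp [Pi.single_eq_of_ne (by simpa using hj : j ≠ i)]

theorem mul_taylorTerm_pd (hh : SmoothNear h 0) (i : Fin s) (α : Fin s → ℕ) (x : Fin s → ℝ) :
    x i * taylorTerm s α (pd s i h) x
      = (α + Pi.single i 1 : Fin s → ℕ) i * taylorTerm s (α + Pi.single i 1) h x := by
  have hfact := congrArg (Nat.cast (R := ℝ)) (prod_factorial_add_single α i)
  have hmonomial : ∏ j, x j ^ (α + Pi.single i 1 : Fin s → ℕ) j = x i * ∏ j, x j ^ α j := by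
    simp only [Pi.add_apply, pow_add, Finset.prod_mul_distrib]
    rw [Fintype.prod_eq_single (f := fun j => x j ^ (Pi.single i 1 : Fin s → ℕ) j) i
      fun j hj => by rw [Pi.single_eq_of_ne hj, pow_zero], Pi.single_eq_same, pow_one, mul_comm]
  push_cast at hfact
  rw [taylorTerm, taylorTerm, mderiv_add_single hh, hfact, hmonomial, Pi.add_apply,
    Pi.single_eq_same]
  have hpos : ∏ j, ((α j).factorial : ℝ) ≠ 0 := by positivity
  have hsucc : (α i : ℝ) + 1 ≠ 0 := by positivity
  push_cast
  field_simp

end MultiIndexTaylorCoefficients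

section Dilation

variable {s : ℕ} (lam : Fin s → ℕ)

/-- The quasi-homogeneous dilation `x ↦ (τ ^ lam i * x i)ᵢ`. -/
def dilation (τ : ℝ) : (Fin s → ℝ) →L[ℝ] (Fin s → ℝ) :=
  ContinuousLinearMap.pi fun i => τ ^ lam i • ContinuousLinearMap.proj i

theorem dilation_apply (τ : ℝ) (x : Fin s → ℝ) (i : Fin s) :
    dilation lam τ x i = τ ^ lam i * x i := rfl

theorem dilation_dilation (τ σ : ℝ) (x : Fin s → ℝ) :
    dilation lam τ (dilation lam σ x) = dilation lam (σ * τ) x := by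
  funext i
  simp only [dilation_apply]
  ring

theorem dilation_single (τ : ℝ) (i : Fin s) :
    dilation lam τ (Pi.single i 1) = τ ^ lam i • Pi.single i (1 : ℝ) := by
  funext j
  obtain rfl | hj := eq_or_ne j i
  · simp [dilation_apply]
  · simp [dilation_apply, Pi.single_eq_of_ne hj]

theorem contDiff_dilation : ContDiff ℝ ∞ fun p : ℝ × (Fin s → ℝ) => dilation lam p.1 p.2 := by
  refine contDiff_pi.2 fun i => ?_
  simp only [dilation_apply]
  fun_prop

/-- The quasi-homogeneous part of weight `n` of a function `h`, as the coefficient of `τ ^ n` in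
the Taylor series of `h` along the dilation orbit of a point. -/
def weightedTaylor (n : ℕ) (h : (Fin s → ℝ) → ℝ) : (Fin s → ℝ) → ℝ :=
  fun x => taylorCoeff n fun τ => h (dilation lam τ x)

theorem weightedTaylor_dilation (n : ℕ) (h : (Fin s → ℝ) → ℝ) (σ : ℝ) (x : Fin s → ℝ) :
    weightedTaylor lam n h (dilation lam σ x) = σ ^ n * weightedTaylor lam n h x := by
  simp only [weightedTaylor, dilation_dilation]
  exact taylorCoeff_comp_mul_left n σ fun τ => h (dilation lam τ x)

theorem weightedTaylor_weightedTaylor (n m : ℕ) (h : (Fin s → ℝ) → ℝ) (x : Fin s → ℝ) :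
    weightedTaylor lam n (weightedTaylor lam m h) x
      = if n = m then weightedTaylor lam m h x else 0 := by
  rw [weightedTaylor]
  simp only [weightedTaylor_dilation]
  exact taylorCoeff_pow_smul_const n m _

variable {lam} {F : Type*} [NormedAddCommGroup F] [NormedSpace ℝ F]

theorem dilation_zero (hpos : ∀ i, 0 < lam i) : dilation lam 0 = 0 := by
  ext x i
  simp [dilation_apply, (hpos i).ne']

theorem tendsto_dilation_zero (hpos : ∀ i, 0 < lam i) (x : Fin s → ℝ) :
    Tendsto (fun τ => dilation lam τ x) (𝓝 0) (𝓝 0) := by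
  have h := ((contDiff_dilation lam).continuous.comp (Continuous.prodMk_left x)).tendsto 0
  simpa [Function.comp_def, dilation_zero hpos] using h

theorem SmoothNear.comp_dilation (hpos : ∀ i, 0 < lam i) {h : (Fin s → ℝ) → F}
    (hh : SmoothNear h 0) (x : Fin s → ℝ) :
    SmoothNear (fun p : ℝ × (Fin s → ℝ) => h (dilation lam p.1 p.2)) (0, x) := by
  refine SmoothNear.comp ?_ (.of_contDiff (contDiff_dilation lam) _)
  simpa [dilation_zero hpos] using hh

theorem SmoothNear.comp_dilation_left (hpos : ∀ i, 0 < lam i) {h : (Fin s → ℝ) → F}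
    (hh : SmoothNear h 0) (x : Fin s → ℝ) : SmoothNear (fun τ => h (dilation lam τ x)) 0 :=
  (hh.comp_dilation hpos x).slice

protected theorem SmoothNear.weightedTaylor (hpos : ∀ i, 0 < lam i) {h : (Fin s → ℝ) → ℝ}
    (hh : SmoothNear h 0) (n : ℕ) (x : Fin s → ℝ) : SmoothNear (weightedTaylor lam n h) x :=
  (hh.comp_dilation hpos x).taylorCoeff_slice n

end Dilation

section QuasiHomogeneousTaylor

variable {s : ℕ} {lam : Fin s → ℕ} {h : (Fin s → ℝ) → ℝ}

theorem fderiv_apply_eq_sum_pd (h : (Fin s → ℝ) → ℝ) (x w : Fin s → ℝ) :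
    fderiv ℝ h x w = ∑ i, w i * pd s i h x := by
  conv_lhs => rw [pi_eq_sum_univ' w, map_sum]
  simp [pd]

theorem hasDerivAt_dilation (τ : ℝ) (x : Fin s → ℝ) :
    HasDerivAt (fun τ => dilation lam τ x) (fun i => lam i * τ ^ (lam i - 1) * x i) τ :=
  hasDerivAt_pi.2 fun i => (hasDerivAt_pow (lam i) τ).mul_const (x i)

/-- Euler's recursion, obtained by differentiating `h (dilation lam τ x)` in `τ`. -/
theorem succ_mul_weightedTaylor_succ (hpos : ∀ i, 0 < lam i) (hh : SmoothNear h 0) (n : ℕ)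
    (x : Fin s → ℝ) :
    (n + 1) * weightedTaylor lam (n + 1) h x
      = ∑ i, lam i * (x i * if lam i ≤ n + 1 then
          weightedTaylor lam (n + 1 - lam i) (pd s i h) x else 0) := by
  have hpd (i : Fin s) : SmoothNear (pd s i h) 0 := hh.dirDeriv _
  have chain : deriv (fun τ => h (dilation lam τ x)) =ᶠ[𝓝 0] fun τ =>
      ∑ i, (lam i * x i) • τ ^ (lam i - 1) • pd s i h (dilation lam τ x) := by
    filter_upwards [(tendsto_dilation_zero hpos x).eventually hh.eventually_differentiableAt]
      with τ hτ
    have hderiv : HasDerivAt (fun τ => h (dilation lam τ x)) _ τ :=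
      hτ.hasFDerivAt.comp_hasDerivAt τ (hasDerivAt_dilation τ x)
    rw [hderiv.deriv, fderiv_apply_eq_sum_pd]
    refine Finset.sum_congr rfl fun i _ => ?_
    simp only [smul_eq_mul]
    ring
  have hsmooth (i : Fin s) :
      SmoothNear (fun τ => τ ^ (lam i - 1) • pd s i h (dilation lam τ x)) 0 :=
    (SmoothNear.of_contDiff (by fun_prop) 0).mul ((hpd i).comp_dilation_left hpos x)
  rw [weightedTaylor, taylorCoeff_succ, smul_eq_mul, mul_inv_cancel_left₀ (by positivity),
    taylorCoeff_congr n chain, taylorCoeff_sum n fun i _ => (hsmooth i).const_smul _]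
  refine Finset.sum_congr rfl fun i _ => ?_
  rw [taylorCoeff_const_smul, taylorCoeff_pow_smul n _ ((hpd i).comp_dilation_left hpos x),
    smul_eq_mul, mul_assoc]
  have hi := hpos i
  simp only [show lam i - 1 ≤ n ↔ lam i ≤ n + 1 by lia, show n - (lam i - 1) = n + 1 - lam i by lia]
  rfl

/-- The weight `∑ l, α l * lam l` of the monomial with exponent `α`. -/
def monomialWeight (lam α : Fin s → ℕ) : ℕ := ∑ l, α l * lam l

theorem le_monomialWeight (hpos : ∀ i, 0 < lam i) (α : Fin s → ℕ) (i : Fin s) :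
    α i ≤ monomialWeight lam α :=
  (Nat.le_mul_of_pos_right _ (hpos i)).trans
    (Finset.single_le_sum (f := fun l => α l * lam l) (fun _ _ => Nat.zero_le _)
      (Finset.mem_univ i))

theorem monomialWeight_add_single (α : Fin s → ℕ) (i : Fin s) :
    monomialWeight lam (α + Pi.single i 1) = monomialWeight lam α + lam i := by
  simp [monomialWeight, add_mul, Finset.sum_add_distrib, Pi.single_apply]

/-- The exponents of the monomials of weight `n`, cut out of the box `{0, …, n}^s`, which contains
all of them when the weights are positive. -/
def exponentsOfWeight (lam : Fin s → ℕ) (n : ℕ) : Finset (Fin s → ℕ) :=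
  (Fintype.piFinset fun _ => Finset.range (n + 1)).filter fun α => monomialWeight lam α = n

theorem mem_exponentsOfWeight (hpos : ∀ i, 0 < lam i) {n : ℕ} {α : Fin s → ℕ} :
    α ∈ exponentsOfWeight lam n ↔ monomialWeight lam α = n := by
  simp only [exponentsOfWeight, Finset.mem_filter, Fintype.mem_piFinset, Finset.mem_range,
    Order.lt_add_one_iff, and_iff_right_iff_imp]
  rintro rfl i
  exact le_monomialWeight hpos α i

theorem sum_exponentsOfWeight_mul_taylorTerm (hpos : ∀ i, 0 < lam i) (hh : SmoothNear h 0) (n : ℕ)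
    (i : Fin s) (x : Fin s → ℝ) :
    ∑ α ∈ exponentsOfWeight lam n, (α i : ℝ) * taylorTerm s α h x
      = x i * if lam i ≤ n then
          ∑ β ∈ exponentsOfWeight lam (n - lam i), taylorTerm s β (pd s i h) x else 0 := by
  have shift {α : Fin s → ℕ} (hα : α i ≠ 0) : α - Pi.single i 1 + Pi.single i 1 = α :=
    tsub_add_cancel_of_le (update_le_iff.2 ⟨Nat.one_le_iff_ne_zero.2 hα, fun _ _ => Nat.zero_le _⟩)
  split_ifs with hi
  · simp only [Finset.mul_sum, mul_taylorTerm_pd hh]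
    refine (Finset.sum_of_injOn (· + Pi.single i 1) (add_left_injective _).injOn ?_ ?_ ?_).symm
    · intro β hβ
      simp only [Finset.mem_coe, mem_exponentsOfWeight hpos, monomialWeight_add_single] at hβ ⊢
      lia
    · intro α hα hnot
      suffices α i = 0 by simp [this]
      by_contra hαi
      refine hnot ⟨α - Pi.single i 1, ?_, shift hαi⟩
      have hweight := monomialWeight_add_single (lam := lam) (α - Pi.single i 1) i
      rw [shift hαi] at hweight
      simp only [Finset.mem_coe, mem_exponentsOfWeight hpos] at hα ⊢
      lia
    · exact fun β _ => rfl
  · rw [mul_zero]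
    refine Finset.sum_eq_zero fun α hα => ?_
    suffices α i = 0 by simp [this]
    by_contra hαi
    have hweight := monomialWeight_add_single (lam := lam) (α - Pi.single i 1) i
    rw [shift hαi, (mem_exponentsOfWeight hpos).1 hα] at hweight
    lia

theorem weightedTaylor_eq_sum_taylorTerm (hpos : ∀ i, 0 < lam i) (hh : SmoothNear h 0) (n : ℕ)
    (x : Fin s → ℝ) :
    weightedTaylor lam n h x = ∑ α ∈ exponentsOfWeight lam n, taylorTerm s α h x := by
  induction n using Nat.strong_induction_on generalizing h with
  | _ n ih =>
    cases n with
    | zero =>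
      have hzero : exponentsOfWeight lam 0 = {0} := by
        ext α
        rw [mem_exponentsOfWeight hpos, Finset.mem_singleton]
        refine ⟨fun hα => funext fun i => ?_, fun hα => by simp [hα, monomialWeight]⟩
        simpa [hα] using le_monomialWeight hpos α i
      rw [hzero, Finset.sum_singleton, taylorTerm_zero, weightedTaylor, taylorCoeff_zero,
        dilation_zero hpos, zero_apply]
    | succ n =>
      have hn : (n : ℝ) + 1 ≠ 0 := by positivity
      refine mul_left_cancel₀ hn ?_
      have expand : ((n : ℝ) + 1) * ∑ α ∈ exponentsOfWeight lam (n + 1), taylorTerm s α h x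
          = ∑ i, lam i * ∑ α ∈ exponentsOfWeight lam (n + 1), (α i : ℝ) * taylorTerm s α h x := by
        simp only [Finset.mul_sum]
        rw [Finset.sum_comm]
        refine Finset.sum_congr rfl fun α hα => ?_
        have hweight := congrArg (Nat.cast (R := ℝ)) ((mem_exponentsOfWeight hpos).1 hα)
        push_cast [monomialWeight] at hweight
        rw [← hweight, Finset.sum_mul]
        exact Finset.sum_congr rfl fun i _ => by ring
      rw [succ_mul_weightedTaylor_succ hpos hh, expand]
      refine Finset.sum_congr rfl fun i _ => ?_
      rw [sum_exponentsOfWeight_mul_taylorTerm hpos hh]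
      split_ifs with hi
      · rw [ih (n + 1 - lam i) (by have := hpos i; lia) (h := pd s i h) (hh.dirDeriv _)]
      · rfl

end QuasiHomogeneousTaylor

section AlternatingFormsInCoordinates

variable {s k : ℕ}

/-- The tuple `(e_{I 0}, …, e_{I (k-1)})` of standard basis vectors. -/
def basisTuple (I : Fin k → Fin s) : Fin k → Fin s → ℝ := fun j => Pi.single (I j) 1

/-- The constant form `dx_{I 0} ∧ … ∧ dx_{I (k-1)}`. -/
def coordForm (I : Fin k → Fin s) : (Fin s → ℝ) [⋀^Fin k]→L[ℝ] ℝ :=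
  { Matrix.detRowAlternating.compLinearMap (LinearMap.funLeft ℝ ℝ I) with
    cont := Continuous.matrix_det (by fun_prop) }

theorem coordForm_apply (I : Fin k → Fin s) (v : Fin k → Fin s → ℝ) :
    coordForm I v = Matrix.det (Matrix.of fun a b : Fin k => v a (I b)) := rfl

theorem coordForm_basisTuple {I J : Fin k → Fin s} (hI : StrictMono I) (hJ : StrictMono J) :
    coordForm J (basisTuple I) = if J = I then 1 else 0 := by
  rw [coordForm_apply]
  split_ifs with hJI
  · subst hJI
    convert Matrix.det_one (n := Fin k) (R := ℝ)
    ext a b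
    simp [basisTuple, Pi.single_apply, Matrix.one_apply, hJ.injective.eq_iff, eq_comm]
  · obtain ⟨a, ha⟩ : ∃ a, ∀ b, J b ≠ I a := by
      by_contra! h
      choose σ hσ using h
      have hσ_inj : σ.Injective := fun a a' h => hI.injective (by rw [← hσ a, ← hσ a', h])
      have hrange : Set.range I = Set.range J := by
        rw [← (Finite.surjective_of_injective hσ_inj).range_comp J]
        exact congrArg Set.range (funext fun a => (hσ a).symm)
      exact hJI ((StrictMono.range_inj hJ hI).1 hrange.symm)
    refine Matrix.det_eq_zero_of_row_eq_zero a fun b => ?_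
    simp [basisTuple, ha b]

theorem alternatingMap_ext_basisTuple {A B : (Fin s → ℝ) [⋀^Fin k]→ₗ[ℝ] ℝ}
    (h : ∀ I : Fin k → Fin s, StrictMono I → A (basisTuple I) = B (basisTuple I)) : A = B := by
  refine Module.Basis.ext_alternating (Pi.basisFun ℝ (Fin s)) fun L hL => ?_
  have hsorted := h (L ∘ Tuple.sort L)
    ((Tuple.monotone_sort L).strictMono_of_injective (hL.comp (Tuple.sort L).injective))
  change A (basisTuple L ∘ Tuple.sort L) = B (basisTuple L ∘ Tuple.sort L) at hsorted
  rw [A.map_perm, B.map_perm, smul_left_cancel_iff] at hsorted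
  simp only [Pi.basisFun_apply]
  exact hsorted

open scoped Classical in
theorem alternatingMap_apply_eq_sum (A : (Fin s → ℝ) [⋀^Fin k]→ₗ[ℝ] ℝ) (v : Fin k → Fin s → ℝ) :
    A v = ∑ I with StrictMono I, A (basisTuple I) * coordForm I v := by
  set B : (Fin s → ℝ) [⋀^Fin k]→L[ℝ] ℝ := ∑ I with StrictMono I, A (basisTuple I) • coordForm I
  have hBv (v : Fin k → Fin s → ℝ) :
      B v = ∑ I with StrictMono I, A (basisTuple I) * coordForm I v :=
    ContinuousAlternatingMap.sum_apply ..
  rw [← hBv]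
  refine congrArg (fun C : (Fin s → ℝ) [⋀^Fin k]→ₗ[ℝ] ℝ => C v)
    (alternatingMap_ext_basisTuple (B := B.toAlternatingMap) fun I hI => (?_ : _ = B _))
  rw [hBv, Finset.sum_eq_single_of_mem I (by simpa using hI), coordForm_basisTuple hI hI,
    if_pos rfl, mul_one]
  intro J hJ hJI
  rw [coordForm_basisTuple hI (by simpa using hJ), if_neg hJI, mul_zero]

end AlternatingFormsInCoordinates

section SmoothForms

variable {X : Type*} [NormedAddCommGroup X] [NormedSpace ℝ X] {s s' k : ℕ} {x : X}

theorem SmoothNear.form_apply {Ω : X → (Fin s → ℝ) [⋀^Fin k]→L[ℝ] ℝ} (hΩ : SmoothNear Ω x)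
    (v : Fin k → Fin s → ℝ) : SmoothNear (fun y => Ω y v) x :=
  SmoothNear.comp (.of_contDiff (ContinuousAlternatingMap.apply ℝ _ ℝ v).contDiff _) hΩ

theorem SmoothNear.form_of_apply {Ω : X → (Fin s → ℝ) [⋀^Fin k]→L[ℝ] ℝ}
    (h : ∀ v, SmoothNear (fun y => Ω y v) x) : SmoothNear Ω x := by
  classical
  have expand (y : X) :
      Ω y = ∑ I with StrictMono I, Ω y (basisTuple I) • coordForm I := by
    ext v
    rw [ContinuousAlternatingMap.sum_apply]
    exact alternatingMap_apply_eq_sum (Ω y).toAlternatingMap v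
  rw [funext expand]
  exact .sum fun I _ => (h (basisTuple I)).smul (.const _)

theorem SmoothNear.form_comp {Ω : X → (Fin s → ℝ) [⋀^Fin k]→L[ℝ] ℝ}
    {A : X → (Fin s' → ℝ) →L[ℝ] (Fin s → ℝ)} (hΩ : SmoothNear Ω x) (hA : SmoothNear A x) :
    SmoothNear (fun y => (Ω y).compContinuousLinearMap (A y)) x := by
  classical
  refine form_of_apply fun v => ?_
  have hentry (a : Fin k) (i : Fin s) : SmoothNear (fun y => A y (v a) i) x :=
    (hA.clm_apply (.const (v a))).pi_apply i
  refine congr (.sum fun I _ => (hΩ.form_apply _).mul (.det fun a b => hentry a (I b)))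
    (.of_forall fun y => alternatingMap_apply_eq_sum (Ω y).toAlternatingMap _)

protected theorem SmoothNear.extDeriv {B : (Fin s → ℝ) → (Fin s → ℝ) [⋀^Fin k]→L[ℝ] ℝ}
    {x : Fin s → ℝ} (hB : SmoothNear B x) : SmoothNear (extDeriv B) x :=
  SmoothNear.comp (g := ContinuousAlternatingMap.alternatizeUncurryFinCLM ℝ (Fin s → ℝ) ℝ)
    (.of_contDiff (ContinuousLinearMap.contDiff _) _) hB.fderiv

end SmoothForms

section AlternatingMaps

variable {E F : Type*} [NormedAddCommGroup E] [NormedSpace ℝ E] [NormedAddCommGroup F]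
  [NormedSpace ℝ F] {k : ℕ}

/-- Two slots filled with multiples of `e` kill an alternating map, so `T` is affine in `U`. -/
theorem compContinuousLinearMap_add_smulRight (T : F [⋀^Fin (k + 1)]→L[ℝ] ℝ) (Y : E →L[ℝ] F)
    (U : E →L[ℝ] ℝ) (e : F) :
    T.compContinuousLinearMap (Y + U.smulRight e) = T.compContinuousLinearMap Y +
      ContinuousAlternatingMap.alternatizeUncurryFin
        (U.smulRight ((T.curryLeft e).compContinuousLinearMap Y)) := by
  have hlinear : ContinuousAlternatingMap.alternatizeUncurryFin
      (U.smulRight ((T.curryLeft e).compContinuousLinearMap Y))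
        = T.fderivCompContinuousLinearMap Y (U.smulRight e) := by
    rw [ContinuousAlternatingMap.fderivCompContinuousLinearMap_eq_alternatizeUncurryFin,
      ContinuousLinearMap.comp_apply, ContinuousAlternatingMap.alternatizeUncurryFinCLM_apply]
    congr 1
    ext x v
    simp
  have hvanish (w : Fin (k + 1) → F) {i j : Fin (k + 1)} (hij : i ≠ j) {a b : ℝ}
      (hi : w i = a • e) (hj : w j = b • e) : T w = 0 := by
    rw [← Function.update_eq_self i w, hi, T.map_update_smul,
      ← Function.update_eq_self j (Function.update w i e), Function.update_of_ne hij.symm, hj,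
      T.map_update_smul, T.map_eq_zero_of_eq _ (by simp [Function.update_of_ne hij]) hij,
      smul_zero, smul_zero]
  ext v
  have hexpand := T.toMultilinearMap.map_add_eq_map_add_linearDeriv_add (fun i => Y (v i))
    fun i => U (v i) • e
  rw [Finset.sum_eq_zero fun S hS => ?_, add_zero] at hexpand
  · rw [hlinear]
    refine hexpand.trans (congrArg (T (fun i => Y (v i)) + ·) ?_)
    rw [MultilinearMap.linearDeriv_apply]
    refine Eq.trans ?_ (T.fderivCompContinuousLinearMap_apply Y _ v).symm
    refine Finset.sum_congr rfl fun i _ => congrArg T (funext fun j => ?_)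
    obtain rfl | hij := eq_or_ne j i
    · simp
    · simp [Function.update_of_ne hij]
  · obtain ⟨i, hi, j, hj, hij⟩ := Finset.one_lt_card.1 (Finset.mem_filter.1 hS).2
    exact hvanish _ hij (Finset.piecewise_eq_of_mem _ _ _ hi) (Finset.piecewise_eq_of_mem _ _ _ hj)

theorem extDeriv_function_smul {u : E → ℝ} {C : E → E [⋀^Fin k]→L[ℝ] ℝ} {x : E}
    (hu : DifferentiableAt ℝ u x) (hC : DifferentiableAt ℝ C x) :
    extDeriv (fun y => u y • C y) x = u x • extDeriv C x +
      ContinuousAlternatingMap.alternatizeUncurryFin ((fderiv ℝ u x).smulRight (C x)) := by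
  rw [extDeriv, fderiv_fun_smul hu hC, ContinuousAlternatingMap.alternatizeUncurryFin_add,
    ContinuousAlternatingMap.alternatizeUncurryFin_smul, extDeriv]

end AlternatingMaps

section ZeroRestriction

variable {s k : ℕ} {f : ℝ → Fin s → ℝ}

/-- Differential `k`-forms on `ℝ^s`. -/
abbrev DiffForm (s k : ℕ) := (Fin s → ℝ) → (Fin s → ℝ) [⋀^Fin k]→L[ℝ] ℝ

/-- The form `Ω` has zero algebraic restriction to `f`; this is `ZeroARK` for bundled forms. -/
def ZeroRestriction (f : ℝ → Fin s → ℝ) (Ω : DiffForm s (k + 1)) : Prop :=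
  ∃ (A : DiffForm s (k + 1)) (B : DiffForm s k), SmoothNear A 0 ∧ SmoothNear B 0 ∧
    (∀ᶠ t in 𝓝 0, A (f t) = 0) ∧ (∀ᶠ t in 𝓝 0, B (f t) = 0) ∧
    ∀ᶠ x in 𝓝 0, Ω x = A x + extDeriv B x

namespace ZeroRestriction

variable {Ω Ω' : DiffForm s (k + 1)}

theorem congr (h : ZeroRestriction f Ω) (e : Ω' =ᶠ[𝓝 0] Ω) : ZeroRestriction f Ω' := by
  obtain ⟨A, B, hA, hB, hAf, hBf, hΩ⟩ := h
  exact ⟨A, B, hA, hB, hAf, hBf, by filter_upwards [e, hΩ] with x hx hx' using hx.trans hx'⟩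

theorem zero : ZeroRestriction f (fun _ => 0 : DiffForm s (k + 1)) :=
  ⟨fun _ => 0, fun _ => 0, .const 0, .const 0, .of_forall fun _ => rfl, .of_forall fun _ => rfl,
    .of_forall fun x => by
      simpa [extDeriv] using
        (map_zero (ContinuousAlternatingMap.alternatizeUncurryFinCLM ℝ (Fin s → ℝ) ℝ)).symm⟩

theorem add (h : ZeroRestriction f Ω) (h' : ZeroRestriction f Ω') :
    ZeroRestriction f (fun x => Ω x + Ω' x) := by
  obtain ⟨A, B, hA, hB, hAf, hBf, hΩ⟩ := h
  obtain ⟨A', B', hA', hB', hAf', hBf', hΩ'⟩ := h'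
  refine ⟨fun x => A x + A' x, fun x => B x + B' x, hA.add hA', hB.add hB', ?_, ?_, ?_⟩
  · filter_upwards [hAf, hAf'] with t ht ht' using by rw [ht, ht', add_zero]
  · filter_upwards [hBf, hBf'] with t ht ht' using by rw [ht, ht', add_zero]
  · filter_upwards [hΩ, hΩ', hB.eventually_differentiableAt, hB'.eventually_differentiableAt]
      with x hx hx' hBx hBx'
    rw [hx, hx', extDeriv_fun_add hBx hBx', add_add_add_comm]

theorem const_smul (h : ZeroRestriction f Ω) (c : ℝ) : ZeroRestriction f (fun x => c • Ω x) := by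
  obtain ⟨A, B, hA, hB, hAf, hBf, hΩ⟩ := h
  refine ⟨fun x => c • A x, fun x => c • B x, hA.const_smul c, hB.const_smul c, ?_, ?_, ?_⟩
  · filter_upwards [hAf] with t ht using by rw [ht, smul_zero]
  · filter_upwards [hBf] with t ht using by rw [ht, smul_zero]
  · filter_upwards [hΩ] with x hx
    rw [hx, smul_add, ← extDeriv_smul]
    rfl

theorem sub (h : ZeroRestriction f Ω) (h' : ZeroRestriction f Ω') :
    ZeroRestriction f (fun x => Ω x - Ω' x) :=
  (h.add (h'.const_smul (-1))).congr (.of_forall fun x => by ext; simp [sub_eq_add_neg])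

theorem sum {ι : Type*} {t : Finset ι} {Ω : ι → DiffForm s (k + 1)}
    (h : ∀ i ∈ t, ZeroRestriction f (Ω i)) : ZeroRestriction f (fun x => ∑ i ∈ t, Ω i x) := by
  classical
  induction t using Finset.induction_on with
  | empty => simpa using zero
  | insert i t hi ih =>
    simp only [Finset.sum_insert hi]
    exact (h i (Finset.mem_insert_self i t)).add
      (ih fun j hj => h j (Finset.mem_insert_of_mem hj))

end ZeroRestriction

/-- The pullback `Φ^*Ω`. -/
def pullback (Φ : (Fin s → ℝ) → Fin s → ℝ) (Ω : DiffForm s k) : DiffForm s k :=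
  fun x => (Ω (Φ x)).compContinuousLinearMap (fderiv ℝ Φ x)

variable {Φ L : (Fin s → ℝ) → Fin s → ℝ}

protected theorem SmoothNear.pullback {Ω : DiffForm s k} (hΩ : SmoothNear Ω 0) (hΦ : SmoothNear Φ 0)
    (hΦ₀ : Φ 0 = 0) : SmoothNear (pullback Φ Ω) 0 :=
  .form_comp (.comp (by rwa [hΦ₀]) hΦ) hΦ.fderiv

theorem extDeriv_pullback_comm {B : DiffForm s k} {x : Fin s → ℝ}
    (hB : DifferentiableAt ℝ B (Φ x)) (hΦ : ContDiffAt ℝ ∞ Φ x) :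
    extDeriv (pullback Φ B) x = pullback Φ (extDeriv B) x :=
  extDeriv_pullback hB hΦ (by simpa using WithTop.coe_le_coe.2 (le_top (a := (2 : ℕ∞))))

protected theorem ZeroRestriction.pullback {g : ℝ → Fin s → ℝ} {φ : ℝ → ℝ} {Ω : DiffForm s (k + 1)}
    (h : ZeroRestriction g Ω) (hΦ : SmoothNear Φ 0) (hΦ₀ : Φ 0 = 0)
    (hφ : Tendsto φ (𝓝 0) (𝓝 0)) (hconj : ∀ᶠ t in 𝓝 0, Φ (f t) = g (φ t)) :
    ZeroRestriction f (pullback Φ Ω) := by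
  obtain ⟨A, B, hA, hB, hAg, hBg, hΩ⟩ := h
  have hΦ_tendsto : Tendsto Φ (𝓝 0) (𝓝 0) := by simpa [ContinuousAt, hΦ₀] using hΦ.continuousAt
  refine ⟨_, _, hA.pullback hΦ hΦ₀, hB.pullback hΦ hΦ₀, ?_, ?_, ?_⟩
  · filter_upwards [hconj, hφ.eventually hAg] with t ht hAt
    rw [pullback, ht, hAt]
    rfl
  · filter_upwards [hconj, hφ.eventually hBg] with t ht hBt
    rw [pullback, ht, hBt]
    rfl
  · filter_upwards [hΦ_tendsto.eventually hΩ, hΦ_tendsto.eventually hB.eventually_differentiableAt,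
      hΦ] with x hx hBx hΦx
    rw [extDeriv_pullback_comm hBx hΦx, pullback, hx]
    rfl

theorem zeroRestriction_pullback_sub_of_rankOne {Ω : DiffForm s (k + 1)}
    {u : (Fin s → ℝ) → ℝ} {e : Fin s → ℝ} (hΩ : SmoothNear Ω 0) (hL : SmoothNear L 0)
    (hL₀ : L 0 = 0) (hu : SmoothNear u 0) (hu₀ : u 0 = 0) (huf : ∀ᶠ t in 𝓝 0, u (f t) = 0) :
    ZeroRestriction f
      (fun x => pullback (fun y => L y + u y • e) Ω x - pullback L Ω x) := by
  set Φ : (Fin s → ℝ) → Fin s → ℝ := fun y => L y + u y • e with hΦ_def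
  have hΦ : SmoothNear Φ 0 := hL.add (hu.smul (.const e))
  have hΩΦ : SmoothNear (fun x => Ω (Φ x)) 0 := .comp (by simpa [hΦ_def, hL₀, hu₀] using hΩ) hΦ
  have hΩL : SmoothNear (fun x => Ω (L x)) 0 := .comp (by rwa [hL₀]) hL
  set C : DiffForm s k := fun x => ((Ω (Φ x)).curryLeft e).compContinuousLinearMap (fderiv ℝ L x)
  have hC : SmoothNear C 0 :=
    .form_comp (.form_of_apply fun v => hΩΦ.form_apply (Matrix.vecCons e v)) hL.fderiv
  refine ⟨fun x => (Ω (Φ x) - Ω (L x)).compContinuousLinearMap (fderiv ℝ L x) - u x • extDeriv C x,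
    fun x => u x • C x, (SmoothNear.form_comp (hΩΦ.sub hΩL) hL.fderiv).sub (hu.smul hC.extDeriv),
    hu.smul hC, ?_, ?_, ?_⟩
  · filter_upwards [huf] with t ht
    simp only [hΦ_def, ht, zero_smul, add_zero, sub_self, sub_zero]
    rfl
  · filter_upwards [huf] with t ht using by rw [ht, zero_smul]
  · filter_upwards [hL.eventually_differentiableAt, hu.eventually_differentiableAt,
      hC.eventually_differentiableAt] with x hLx hux hCx
    have hfderiv : fderiv ℝ Φ x = fderiv ℝ L x + (fderiv ℝ u x).smulRight e := by
      rw [hΦ_def, fderiv_fun_add hLx (hux.smul_const e), fderiv_smul_const hux]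
    have hpull : pullback Φ Ω x = (Ω (Φ x)).compContinuousLinearMap (fderiv ℝ L x) +
        ContinuousAlternatingMap.alternatizeUncurryFin ((fderiv ℝ u x).smulRight (C x)) := by
      rw [pullback, hfderiv, compContinuousLinearMap_add_smulRight]
    have hsub : (Ω (Φ x) - Ω (L x)).compContinuousLinearMap (fderiv ℝ L x)
        = (Ω (Φ x)).compContinuousLinearMap (fderiv ℝ L x) - pullback L Ω x := rfl
    rw [hpull, extDeriv_function_smul hux hCx, hsub]
    abel

/-- Replacing the components of `L` by those of `Φ` one at a time reduces to rank-one changes. -/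
theorem zeroRestriction_pullback_sub {Ω : DiffForm s (k + 1)} (hΩ : SmoothNear Ω 0)
    (hΦ : SmoothNear Φ 0) (hΦ₀ : Φ 0 = 0) (hL : SmoothNear L 0) (hL₀ : L 0 = 0)
    (hf : ∀ᶠ t in 𝓝 0, Φ (f t) = L (f t)) :
    ZeroRestriction f (fun x => pullback Φ Ω x - pullback L Ω x) := by
  have hpartial (S : Finset (Fin s)) :
      ZeroRestriction f (fun x => pullback (fun y => S.piecewise (Φ y) (L y)) Ω x
        - pullback L Ω x) := by
    induction S using Finset.induction_on with
    | empty => simpa using ZeroRestriction.zero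
    | insert i S hi ih =>
      set M : (Fin s → ℝ) → Fin s → ℝ := fun y => S.piecewise (Φ y) (L y) with hM_def
      have hstep (y : Fin s → ℝ) : (insert i S).piecewise (Φ y) (L y)
          = M y + (Φ y i - L y i) • Pi.single i (1 : ℝ) := by
        ext j
        obtain rfl | hj := eq_or_ne j i
        · simp [hM_def, hi]
        · simp [hM_def, hj, Finset.piecewise]
      have hM : SmoothNear M 0 := .pi fun j => by
        by_cases hj : j ∈ S
        · simpa [hM_def, hj] using hΦ.pi_apply j
        · simpa [hM_def, hj] using hL.pi_apply j
      have hrankOne := zeroRestriction_pullback_sub_of_rankOne (f := f) (e := Pi.single i 1) hΩ hM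
        (by simp [hM_def, hΦ₀, hL₀, Finset.piecewise_same])
        ((hΦ.pi_apply i).sub (hL.pi_apply i)) (by simp [hΦ₀, hL₀])
        (hf.mono fun t ht => by simp [ht])
      simp only [hstep]
      simpa using hrankOne.add ih
  simpa using hpartial Finset.univ

end ZeroRestriction

section WeightedParts

variable {s k : ℕ} (lam : Fin s → ℕ)

/-- The quasi-homogeneous part of quasi-degree `n` of `Ω`, read off from the Taylor expansion in `τ`
of the pullback of `Ω` by the dilation with parameter `τ`. -/
def weightedPart (n : ℕ) (Ω : DiffForm s k) : DiffForm s k :=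
  fun x => taylorCoeff n fun τ => pullback (dilation lam τ) Ω x

theorem pullback_dilation_apply (τ : ℝ) (Ω : DiffForm s k) (x : Fin s → ℝ) :
    pullback (dilation lam τ) Ω x
      = (Ω (dilation lam τ x)).compContinuousLinearMap (dilation lam τ) := by
  rw [pullback, ContinuousLinearMap.fderiv]

theorem pullback_dilation_comp_dilation (τ σ : ℝ) (Ω : DiffForm s k) (x : Fin s → ℝ) :
    (pullback (dilation lam τ) Ω (dilation lam σ x)).compContinuousLinearMap (dilation lam σ)
      = pullback (dilation lam (σ * τ)) Ω x := by
  ext v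
  simp only [pullback_dilation_apply, dilation_dilation,
    ContinuousAlternatingMap.compContinuousLinearMap_apply, Function.comp_def]

variable {lam} {Ω Ω' : DiffForm s k}

theorem SmoothNear.pullback_dilation (hpos : ∀ i, 0 < lam i) (hΩ : SmoothNear Ω 0)
    (x : Fin s → ℝ) :
    SmoothNear (fun p : ℝ × (Fin s → ℝ) => pullback (dilation lam p.1) Ω p.2) (0, x) := by
  simp only [pullback_dilation_apply]
  refine (hΩ.comp_dilation hpos x).form_comp (.of_contDiff ?_ _)
  exact contDiff_clm_apply_iff.2 fun y =>
    (contDiff_dilation lam).comp (contDiff_fst.prodMk contDiff_const)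

protected theorem SmoothNear.weightedPart (hpos : ∀ i, 0 < lam i) (hΩ : SmoothNear Ω 0) (n : ℕ)
    (x : Fin s → ℝ) : SmoothNear (weightedPart lam n Ω) x :=
  (hΩ.pullback_dilation hpos x).taylorCoeff_slice n

theorem weightedPart_congr (hpos : ∀ i, 0 < lam i) (e : Ω =ᶠ[𝓝 0] Ω') (n : ℕ) :
    weightedPart lam n Ω = weightedPart lam n Ω' := by
  funext x
  refine taylorCoeff_congr n ?_
  filter_upwards [(tendsto_dilation_zero hpos x).eventually e] with τ hτ
  simp only [pullback_dilation_apply, hτ]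

theorem weightedPart_add (hpos : ∀ i, 0 < lam i) (hΩ : SmoothNear Ω 0) (hΩ' : SmoothNear Ω' 0)
    (n : ℕ) (x : Fin s → ℝ) : weightedPart lam n (fun y => Ω y + Ω' y) x
      = weightedPart lam n Ω x + weightedPart lam n Ω' x :=
  taylorCoeff_add n (hΩ.pullback_dilation hpos x).slice (hΩ'.pullback_dilation hpos x).slice

theorem weightedPart_sub (hpos : ∀ i, 0 < lam i) (hΩ : SmoothNear Ω 0) (hΩ' : SmoothNear Ω' 0)
    (n : ℕ) (x : Fin s → ℝ) : weightedPart lam n (fun y => Ω y - Ω' y) x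
      = weightedPart lam n Ω x - weightedPart lam n Ω' x :=
  (congrArg (taylorCoeff n) (funext fun τ => by ext; simp [pullback])).trans
    (taylorCoeff_sub n (hΩ.pullback_dilation hpos x).slice (hΩ'.pullback_dilation hpos x).slice)

theorem weightedPart_sum (hpos : ∀ i, 0 < lam i) {ι : Type*} {t : Finset ι} {Ω : ι → DiffForm s k}
    (hΩ : ∀ i ∈ t, SmoothNear (Ω i) 0) (n : ℕ) (x : Fin s → ℝ) :
    weightedPart lam n (fun y => ∑ i ∈ t, Ω i y) x = ∑ i ∈ t, weightedPart lam n (Ω i) x := by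
  refine Eq.trans (congrArg (taylorCoeff n) (funext fun τ => ?_))
    (taylorCoeff_sum n fun i hi => ((hΩ i hi).pullback_dilation hpos x).slice)
  ext v
  simp [pullback]

theorem taylorCoeff_pullback_dilation_comp (hpos : ∀ i, 0 < lam i) (hΩ : SmoothNear Ω 0) (n : ℕ)
    (x : Fin s → ℝ) (A : (Fin s → ℝ) →L[ℝ] Fin s → ℝ) :
    taylorCoeff n (fun τ => (pullback (dilation lam τ) Ω x).compContinuousLinearMap A)
      = (weightedPart lam n Ω x).compContinuousLinearMap A :=
  taylorCoeff_clm_comp n (ContinuousAlternatingMap.compContinuousLinearMapCLM A)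
    (hΩ.pullback_dilation hpos x).slice

theorem pullback_dilation_weightedPart (hpos : ∀ i, 0 < lam i) (hΩ : SmoothNear Ω 0) (n : ℕ)
    (σ : ℝ) (x : Fin s → ℝ) :
    pullback (dilation lam σ) (weightedPart lam n Ω) x = σ ^ n • weightedPart lam n Ω x := by
  rw [pullback_dilation_apply, ← taylorCoeff_pullback_dilation_comp hpos hΩ]
  simp only [pullback_dilation_comp_dilation]
  exact taylorCoeff_comp_mul_left n σ fun τ => pullback (dilation lam τ) Ω x

theorem weightedPart_weightedPart (hpos : ∀ i, 0 < lam i) (hΩ : SmoothNear Ω 0) (n m : ℕ)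
    (x : Fin s → ℝ) : weightedPart lam n (weightedPart lam m Ω) x
      = if n = m then weightedPart lam m Ω x else 0 := by
  rw [weightedPart]
  simp only [pullback_dilation_weightedPart hpos hΩ]
  exact taylorCoeff_pow_smul_const n m _

theorem extDeriv_weightedPart (hpos : ∀ i, 0 < lam i) (hΩ : SmoothNear Ω 0) (n : ℕ)
    (x : Fin s → ℝ) :
    extDeriv (weightedPart lam n Ω) x = weightedPart lam n (extDeriv Ω) x := by
  have hsmooth := hΩ.pullback_dilation hpos x
  have hfderiv : fderiv ℝ (weightedPart lam n Ω) x
      = taylorCoeff n fun τ => fderiv ℝ (pullback (dilation lam τ) Ω) x :=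
    fderiv_taylorCoeff_slice n hsmooth
  rw [extDeriv, hfderiv]
  refine (taylorCoeff_clm_comp n
    (ContinuousAlternatingMap.alternatizeUncurryFinCLM ℝ (Fin s → ℝ) ℝ)
    hsmooth.fderiv_slice).symm.trans ?_
  refine taylorCoeff_congr n ?_
  filter_upwards [(tendsto_dilation_zero hpos x).eventually hΩ.eventually_differentiableAt]
    with τ hτ
  exact extDeriv_pullback_comm hτ (dilation lam τ).contDiff.contDiffAt

end WeightedParts

section MonomialCurve

variable {s k : ℕ} {lam : Fin s → ℕ}

/-- The curve `t ↦ (t ^ lam i)ᵢ`. -/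
def monomialCurve (lam : Fin s → ℕ) (t : ℝ) : Fin s → ℝ := fun i => t ^ lam i

theorem monomialCurve_zero (hpos : ∀ i, 0 < lam i) : monomialCurve lam 0 = 0 :=
  funext fun i => zero_pow (hpos i).ne'

theorem dilation_monomialCurve (τ t : ℝ) :
    dilation lam τ (monomialCurve lam t) = monomialCurve lam (t * τ) := by
  funext i
  rw [dilation_apply, monomialCurve, monomialCurve, mul_pow, mul_comm]

theorem weightedPart_monomialCurve_eq_zero {Ω : DiffForm s k}
    (h : ∀ᶠ t in 𝓝 0, Ω (monomialCurve lam t) = 0) (n : ℕ) (t : ℝ) :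
    weightedPart lam n Ω (monomialCurve lam t) = 0 := by
  have htendsto : Tendsto (fun τ : ℝ => t * τ) (𝓝 0) (𝓝 0) := by
    simpa using (continuous_const_mul t).tendsto 0
  refine taylorCoeff_eq_zero n ?_
  filter_upwards [htendsto.eventually h] with τ hτ
  rw [pullback_dilation_apply, dilation_monomialCurve, hτ]
  rfl

protected theorem ZeroRestriction.weightedPart (hpos : ∀ i, 0 < lam i) {Ω : DiffForm s (k + 1)}
    (h : ZeroRestriction (monomialCurve lam) Ω) (n : ℕ) :
    ZeroRestriction (monomialCurve lam) (weightedPart lam n Ω) := by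
  obtain ⟨A, B, hA, hB, hAf, hBf, hΩ⟩ := h
  refine ⟨_, _, hA.weightedPart hpos n 0, hB.weightedPart hpos n 0,
    .of_forall (weightedPart_monomialCurve_eq_zero hAf n),
    .of_forall (weightedPart_monomialCurve_eq_zero hBf n), .of_forall fun x => ?_⟩
  rw [weightedPart_congr hpos hΩ, weightedPart_add hpos hA hB.extDeriv,
    extDeriv_weightedPart hpos hB]

end MonomialCurve

section MapsTangentToDilations

variable {s k : ℕ} {lam : Fin s → ℕ} {a : ℝ} {Φ L : (Fin s → ℝ) → Fin s → ℝ}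

/-- Each component `L i` agrees with that of the dilation with parameter `a` up to terms of weight
greater than `lam i`. -/
def IsTangentToDilation (lam : Fin s → ℕ) (a : ℝ) (L : (Fin s → ℝ) → Fin s → ℝ) : Prop :=
  ∀ i, ∀ n ≤ lam i, ∀ x,
    weightedTaylor lam n (fun y => L y i) x = if n = lam i then dilation lam a x i else 0

/-- The conjugate of `L` by the dilation with parameter `τ`; junk for `τ = 0`. -/
def rescale (lam : Fin s → ℕ) (L : (Fin s → ℝ) → Fin s → ℝ) (τ : ℝ) (x : Fin s → ℝ) : Fin s → ℝ :=
  fun i => (τ ^ lam i)⁻¹ • L (dilation lam τ x) i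

theorem dilation_rescale {τ : ℝ} (hτ : τ ≠ 0) (x : Fin s → ℝ) :
    dilation lam τ (rescale lam L τ x) = L (dilation lam τ x) := by
  funext i
  rw [dilation_apply, rescale, smul_eq_mul, mul_inv_cancel_left₀ (pow_ne_zero _ hτ)]

theorem tendsto_rescale (hpos : ∀ i, 0 < lam i) (hL : SmoothNear L 0)
    (htan : IsTangentToDilation lam a L) (x : Fin s → ℝ) :
    Tendsto (fun τ => rescale lam L τ x) (𝓝[≠] 0) (𝓝 (dilation lam a x)) := by
  refine tendsto_pi_nhds.2 fun i => ?_
  have h := tendsto_inv_pow_smul ((hL.pi_apply i).comp_dilation_left hpos x)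
    fun q hq => (htan i q hq.le x).trans (if_neg hq.ne)
  exact ((htan i (lam i) le_rfl x).trans (if_pos rfl)) ▸ h

theorem eventually_differentiableAt_comp_dilation (hpos : ∀ i, 0 < lam i) (hL : SmoothNear L 0)
    (x : Fin s → ℝ) : ∀ᶠ τ in 𝓝[≠] 0, DifferentiableAt ℝ L (dilation lam τ x) :=
  ((tendsto_dilation_zero hpos x).eventually hL.eventually_differentiableAt).filter_mono
    nhdsWithin_le_nhds

theorem hasFDerivAt_rescale {τ : ℝ} {x : Fin s → ℝ}
    (hL : DifferentiableAt ℝ L (dilation lam τ x)) :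
    HasFDerivAt (rescale lam L τ) (.pi fun i =>
      (τ ^ lam i)⁻¹ • fderiv ℝ (fun y => L (dilation lam τ y) i) x) x := by
  have hcomp : DifferentiableAt ℝ (fun y => L (dilation lam τ y)) x :=
    hL.comp x (dilation lam τ).differentiableAt
  exact hasFDerivAt_pi.2 fun i => (differentiableAt_pi.1 hcomp i).hasFDerivAt.fun_const_smul _

theorem tendsto_fderiv_rescale (hpos : ∀ i, 0 < lam i) (hL : SmoothNear L 0)
    (htan : IsTangentToDilation lam a L) (x : Fin s → ℝ) :
    Tendsto (fun τ => fderiv ℝ (rescale lam L τ) x) (𝓝[≠] 0) (𝓝 (dilation lam a)) := by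
  have hcoeff (i : Fin s) {n : ℕ} (hn : n ≤ lam i) :
      taylorCoeff n (fun τ => fderiv ℝ (fun y => L (dilation lam τ y) i) x)
        = if n = lam i then a ^ lam i • ContinuousLinearMap.proj i else 0 := by
    refine (fderiv_taylorCoeff_slice n ((hL.pi_apply i).comp_dilation hpos x)).symm.trans ?_
    refine (congrArg (fderiv ℝ · x) (funext (htan i n hn))).trans ?_
    split_ifs
    · exact (a ^ lam i • ContinuousLinearMap.proj i : (Fin s → ℝ) →L[ℝ] ℝ).hasFDerivAt.fderiv
    · exact fderiv_const_apply _
  have hcomponent (i : Fin s) :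
      Tendsto (fun τ => (τ ^ lam i)⁻¹ • fderiv ℝ (fun y => L (dilation lam τ y) i) x) (𝓝[≠] 0)
        (𝓝 (a ^ lam i • ContinuousLinearMap.proj i)) := by
    have h := tendsto_inv_pow_smul ((hL.pi_apply i).comp_dilation hpos x).fderiv_slice
      fun q hq => (hcoeff i hq.le).trans (if_neg hq.ne)
    rwa [(hcoeff i le_rfl).trans (if_pos rfl)] at h
  refine (((ContinuousLinearMap.piEquivL ℝ (Fin s → ℝ) fun _ => ℝ).continuous.tendsto _).comp
    (tendsto_pi_nhds.2 hcomponent)).congr' ?_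
  filter_upwards [eventually_differentiableAt_comp_dilation hpos hL x] with τ hτ
  exact (hasFDerivAt_rescale hτ).fderiv.symm

theorem pullback_dilation_pullback {η : DiffForm s k} {τ : ℝ} {x : Fin s → ℝ} (hτ : τ ≠ 0)
    (hL : DifferentiableAt ℝ L (dilation lam τ x)) :
    pullback (dilation lam τ) (pullback L η) x
      = (pullback (dilation lam τ) η (rescale lam L τ x)).compContinuousLinearMap
          (fderiv ℝ (rescale lam L τ) x) := by
  have hderiv : (fderiv ℝ L (dilation lam τ x)).comp (dilation lam τ)
      = (dilation lam τ).comp (fderiv ℝ (rescale lam L τ) x) := by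
    have hconj := (dilation lam τ).hasFDerivAt.comp x
      (hasFDerivAt_rescale hL).differentiableAt.hasFDerivAt
    rw [funext (dilation_rescale hτ) (f := _ ∘ _)] at hconj
    exact (hL.hasFDerivAt.comp x (dilation lam τ).hasFDerivAt).unique hconj
  rw [pullback_dilation_apply, pullback_dilation_apply, dilation_rescale hτ]
  ext v
  exact congrArg (η _) (funext fun j => DFunLike.congr_fun hderiv (v j))

theorem tendsto_inv_pow_smul_pullback_dilation_pullback (hpos : ∀ i, 0 < lam i)
    (hL : SmoothNear L 0) (htan : IsTangentToDilation lam a L) {η : DiffForm s k}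
    (hη : SmoothNear η 0) {r : ℕ} (hlow : ∀ q < r, ∀ x, weightedPart lam q η x = 0)
    (x : Fin s → ℝ) :
    Tendsto (fun τ => (τ ^ r)⁻¹ • pullback (dilation lam τ) (pullback L η) x) (𝓝[≠] 0)
      (𝓝 (a ^ r • weightedPart lam r η x)) := by
  set y₀ := dilation lam a x
  have hG : SmoothNear (fun p : ℝ × (Fin s → ℝ) × ((Fin s → ℝ) →L[ℝ] Fin s → ℝ) =>
      (pullback (dilation lam p.1) η p.2.1).compContinuousLinearMap p.2.2)
      (0, y₀, dilation lam a) := by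
    have hη' := (hη.pullback_dilation hpos y₀).comp (x := (0, y₀, dilation lam a))
      (f := fun p : ℝ × (Fin s → ℝ) × ((Fin s → ℝ) →L[ℝ] Fin s → ℝ) => (p.1, p.2.1))
      (.of_contDiff (by fun_prop) _)
    exact hη'.form_comp (.of_contDiff contDiff_snd.snd _)
  have hlead : taylorCoeff r (fun τ =>
      (pullback (dilation lam τ) η y₀).compContinuousLinearMap (dilation lam a))
        = a ^ r • weightedPart lam r η x := by
    rw [taylorCoeff_pullback_dilation_comp hpos hη, ← pullback_dilation_apply,
      pullback_dilation_weightedPart hpos hη]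
  have huniform := tendsto_inv_pow_smul_slice r hG fun q hq => .of_forall fun p => by
    refine (taylorCoeff_pullback_dilation_comp hpos hη q p.1 p.2).trans ?_
    rw [hlow q hq]
    rfl
  rw [hlead] at huniform
  refine (huniform.comp (tendsto_id.prodMk ((tendsto_rescale hpos hL htan x).prodMk_nhds
    (tendsto_fderiv_rescale hpos hL htan x)))).congr' ?_
  filter_upwards [self_mem_nhdsWithin, eventually_differentiableAt_comp_dilation hpos hL x]
    with τ hτ hLτ
  rw [pullback_dilation_pullback hτ hLτ]
  rfl

theorem weightedPart_pullback (hpos : ∀ i, 0 < lam i) (hL : SmoothNear L 0) (hL₀ : L 0 = 0)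
    (htan : IsTangentToDilation lam a L) {η : DiffForm s k} (hη : SmoothNear η 0) {r : ℕ}
    (hlow : ∀ q < r, ∀ x, weightedPart lam q η x = 0) (x : Fin s → ℝ) :
    weightedPart lam r (pullback L η) x = a ^ r • weightedPart lam r η x :=
  (taylorCoeff_of_tendsto_inv_pow_smul ((hη.pullback hL hL₀).pullback_dilation hpos x).slice
    (tendsto_inv_pow_smul_pullback_dilation_pullback hpos hL htan hη hlow x) le_rfl).trans
    (if_pos rfl)

/-- The map obtained from `Φ` by replacing the terms of weight at most `lam i` in its `i`-th
component by those of the dilation with parameter `a`. -/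
def replaceLowWeight (lam : Fin s → ℕ) (a : ℝ) (Φ : (Fin s → ℝ) → Fin s → ℝ) :
    (Fin s → ℝ) → Fin s → ℝ := fun y i =>
  Φ y i - ∑ n ∈ Finset.range (lam i + 1), weightedTaylor lam n (fun z => Φ z i) y
    + dilation lam a y i

theorem SmoothNear.replaceLowWeight (hpos : ∀ i, 0 < lam i) (hΦ : SmoothNear Φ 0) (a : ℝ) :
    SmoothNear (replaceLowWeight lam a Φ) 0 :=
  .pi fun i => ((hΦ.pi_apply i).sub (.sum fun n _ => (hΦ.pi_apply i).weightedTaylor hpos n 0)).add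
    ((SmoothNear.of_contDiff (dilation lam a).contDiff 0).pi_apply i)

theorem isTangentToDilation_replaceLowWeight (hpos : ∀ i, 0 < lam i) (hΦ : SmoothNear Φ 0)
    (a : ℝ) : IsTangentToDilation lam a (replaceLowWeight lam a Φ) := by
  intro i n hn x
  have hΦi := hΦ.pi_apply i
  have hpart (m : ℕ) : SmoothNear (weightedTaylor lam m fun z => Φ z i) 0 :=
    hΦi.weightedTaylor hpos m 0
  have hlow : taylorCoeff n (fun τ => ∑ m ∈ Finset.range (lam i + 1),
      weightedTaylor lam m (fun z => Φ z i) (dilation lam τ x))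
        = weightedTaylor lam n (fun z => Φ z i) x := by
    rw [taylorCoeff_sum n fun m _ => (hpart m).comp_dilation_left hpos x]
    refine (Finset.sum_congr rfl fun m _ => weightedTaylor_weightedTaylor lam n m _ x).trans ?_
    rw [Finset.sum_ite_eq, if_pos (Finset.mem_range_succ_iff.2 hn)]
  have hdilation : taylorCoeff n (fun τ => dilation lam a (dilation lam τ x) i)
      = if n = lam i then dilation lam a x i else 0 :=
    (congrArg (taylorCoeff n) (funext fun τ => mul_left_comm (a ^ lam i) (τ ^ lam i) (x i))).trans
      (taylorCoeff_pow_smul_const n (lam i) (a ^ lam i * x i))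
  have hsmooth := (SmoothNear.of_contDiff (dilation lam a).contDiff 0).pi_apply i
  refine (taylorCoeff_add n ((hΦi.comp_dilation_left hpos x).sub
    (.sum fun m _ => (hpart m).comp_dilation_left hpos x))
    (hsmooth.comp_dilation_left hpos x)).trans ?_
  rw [taylorCoeff_sub n (hΦi.comp_dilation_left hpos x)
    (.sum fun m _ => (hpart m).comp_dilation_left hpos x), hlow, hdilation]
  exact add_eq_right.2 (sub_self _)

theorem weightedTaylor_monomialCurve (n : ℕ) (h : (Fin s → ℝ) → ℝ) (t : ℝ) :
    weightedTaylor lam n h (monomialCurve lam t)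
      = t ^ n * taylorCoeff n fun τ => h (monomialCurve lam τ) := by
  simp only [weightedTaylor, dilation_monomialCurve]
  exact taylorCoeff_comp_mul_left n t fun τ => h (monomialCurve lam τ)

theorem taylorCoeff_comp_monomialCurve (hpos : ∀ i, 0 < lam i) (hΦ : SmoothNear Φ 0) {φ : ℝ → ℝ}
    (hφ : HasDerivAt φ a 0) (hφ₀ : φ 0 = 0)
    (hconj : ∀ᶠ t in 𝓝 0, Φ (monomialCurve lam t) = monomialCurve lam (φ t)) {i : Fin s} {n : ℕ}
    (hn : n ≤ lam i) :
    taylorCoeff n (fun t => Φ (monomialCurve lam t) i) = if n = lam i then a ^ lam i else 0 := by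
  have hcurve : SmoothNear (monomialCurve lam) 0 :=
    .of_contDiff (contDiff_pi.2 fun i => contDiff_id.pow _) 0
  refine taylorCoeff_of_tendsto_inv_pow_smul
    (SmoothNear.comp (monomialCurve_zero hpos ▸ hΦ.pi_apply i) hcurve) ?_ hn
  refine (tendsto_inv_pow_smul_pow_of_hasDerivAt hφ hφ₀ (lam i)).congr' ?_
  filter_upwards [hconj.filter_mono nhdsWithin_le_nhds] with t ht
  rw [ht]
  rfl

theorem replaceLowWeight_monomialCurve (hpos : ∀ i, 0 < lam i) (hΦ : SmoothNear Φ 0) {φ : ℝ → ℝ}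
    (hφ : HasDerivAt φ a 0) (hφ₀ : φ 0 = 0)
    (hconj : ∀ᶠ t in 𝓝 0, Φ (monomialCurve lam t) = monomialCurve lam (φ t)) (t : ℝ) :
    replaceLowWeight lam a Φ (monomialCurve lam t) = Φ (monomialCurve lam t) := by
  funext i
  have hlow : ∑ n ∈ Finset.range (lam i + 1),
      weightedTaylor lam n (fun z => Φ z i) (monomialCurve lam t) = t ^ lam i * a ^ lam i := by
    rw [Finset.sum_eq_single_of_mem (lam i) (Finset.self_mem_range_succ _)]
    · rw [weightedTaylor_monomialCurve, taylorCoeff_comp_monomialCurve hpos hΦ hφ hφ₀ hconj le_rfl,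
        if_pos rfl]
    · intro n hn hne
      rw [weightedTaylor_monomialCurve, taylorCoeff_comp_monomialCurve hpos hΦ hφ hφ₀ hconj
        (Finset.mem_range_succ_iff.1 hn), if_neg hne, mul_zero]
  rw [replaceLowWeight, hlow, dilation_monomialCurve, monomialCurve, mul_pow, sub_add_cancel]

theorem weightedPart_sub_sum_weightedPart (hpos : ∀ i, 0 < lam i) {Ω : DiffForm s k}
    (hΩ : SmoothNear Ω 0) (q r : ℕ) (x : Fin s → ℝ) :
    weightedPart lam q (fun y => Ω y - ∑ n ∈ Finset.range r, weightedPart lam n Ω y) x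
      = if q < r then 0 else weightedPart lam q Ω x := by
  have hpart (n : ℕ) : SmoothNear (weightedPart lam n Ω) 0 := hΩ.weightedPart hpos n 0
  rw [weightedPart_sub hpos hΩ (.sum fun n _ => hpart n), weightedPart_sum hpos fun n _ => hpart n]
  simp only [weightedPart_weightedPart hpos hΩ, Finset.sum_ite_eq, Finset.mem_range]
  split_ifs <;> simp

end MapsTangentToDilations

section LeadingParts

variable {s k r : ℕ} {lam : Fin s → ℕ} {a : ℝ} {Φ : (Fin s → ℝ) → Fin s → ℝ} {φ : ℝ → ℝ}
  {Ω₁ Ω₂ : DiffForm s (k + 1)}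

/-- Modulo forms of zero restriction, `Φ` may be replaced by a map tangent to a dilation and `Ω₁` by
a form without terms of quasi-degree less than `r`. -/
theorem zeroRestriction_weightedPart_sub (hpos : ∀ i, 0 < lam i) (hΩ₁ : SmoothNear Ω₁ 0)
    (hΩ₂ : SmoothNear Ω₂ 0) (hΦ : SmoothNear Φ 0) (hφ : HasDerivAt φ a 0) (hφ₀ : φ 0 = 0)
    (hconj : ∀ᶠ t in 𝓝 0, Φ (monomialCurve lam t) = monomialCurve lam (φ t))
    (hsame : ZeroRestriction (monomialCurve lam) (fun x => pullback Φ Ω₁ x - Ω₂ x))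
    (hlow : ∀ q < r, ZeroRestriction (monomialCurve lam) (weightedPart lam q Ω₁)) :
    ZeroRestriction (monomialCurve lam)
      (fun x => weightedPart lam r Ω₂ x - a ^ r • weightedPart lam r Ω₁ x) := by
  have hΦ₀ : Φ 0 = 0 := by simpa [hφ₀, monomialCurve_zero hpos] using hconj.self_of_nhds
  set L := replaceLowWeight lam a Φ
  set low : DiffForm s (k + 1) := fun x => ∑ q ∈ Finset.range r, weightedPart lam q Ω₁ x
  set η : DiffForm s (k + 1) := fun x => Ω₁ x - low x
  have hL : SmoothNear L 0 := hΦ.replaceLowWeight hpos a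
  have hLf (t : ℝ) : L (monomialCurve lam t) = Φ (monomialCurve lam t) :=
    replaceLowWeight_monomialCurve hpos hΦ hφ hφ₀ hconj t
  have hL₀ : L 0 = 0 := by simpa only [monomialCurve_zero hpos, hΦ₀] using hLf 0
  have hη : SmoothNear η 0 := hΩ₁.sub (.sum fun q _ => hΩ₁.weightedPart hpos q 0)
  have hlow_pullback : ZeroRestriction (monomialCurve lam) (pullback L low) :=
    (ZeroRestriction.sum fun q hq => hlow q (Finset.mem_range.1 hq)).pullback hL hL₀
      (by simpa only [ContinuousAt, hφ₀] using hφ.continuousAt)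
      (hconj.mono fun t ht => (hLf t).trans ht)
  have hreplace := zeroRestriction_pullback_sub hΩ₁ hΦ hΦ₀ hL hL₀ (.of_forall fun t => (hLf t).symm)
  have hη_restriction : ZeroRestriction (monomialCurve lam) fun x => Ω₂ x - pullback L η x := by
    refine ((hreplace.sub hsame).add hlow_pullback).congr (.of_forall fun x => ?_)
    ext v
    simp [pullback, η, sub_add]
  refine (hη_restriction.weightedPart hpos r).congr (.of_forall fun x => ?_)
  rw [weightedPart_sub hpos hΩ₂ (hη.pullback hL hL₀), weightedPart_pullback hpos hL hL₀
    (isTangentToDilation_replaceLowWeight hpos hΦ a) hη fun q hq y =>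
      (weightedPart_sub_sum_weightedPart hpos hΩ₁ q r y).trans (if_pos hq),
    weightedPart_sub_sum_weightedPart hpos hΩ₁, if_neg (lt_irrefl r)]

end LeadingParts

section BundledForms

variable {s k : ℕ}

/-- The bundled alternating map given by the value at `x` of an unbundled `k`-form. -/
def IsFormK.alternatingMap {α : FormK s k} (hα : IsFormK s k α) (x : Fin s → ℝ) :
    (Fin s → ℝ) [⋀^Fin k]→ₗ[ℝ] ℝ where
  toFun := α x
  map_update_add' {inst} v i a b := by
    obtain rfl : inst = instDecidableEqFin k := Subsingleton.elim ..
    simpa using hα.1 x v i a b 1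
  map_update_smul' {inst} v i c a := by
    obtain rfl : inst = instDecidableEqFin k := Subsingleton.elim ..
    have hzero : α x (Function.update v i 0) = 0 := by simpa using hα.1 x v i 0 0 1
    simpa [hzero] using hα.1 x v i 0 a c
  map_eq_zero_of_eq' v i j hv hij := hα.2.1 x v ⟨i, j, hij, hv⟩

/-- The bundled form with the same values as an unbundled `k`-form. -/
def IsFormK.toDiffForm {α : FormK s k} (hα : IsFormK s k α) : DiffForm s k := fun x =>
  { hα.alternatingMap x with
    cont := by
      classical
      exact (continuous_finsetSum _ fun I _ => (coordForm I).cont.const_mul _).congr fun v =>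
        (alternatingMap_apply_eq_sum (hα.alternatingMap x) v).symm }

theorem IsFormK.smoothNear_toDiffForm {α : FormK s k} (hα : IsFormK s k α) :
    SmoothNear hα.toDiffForm 0 :=
  .form_of_apply fun v => smoothNear_iff_exists_contDiffOn.2 (hα.2.2 v)

theorem isFormK_of_smoothNear {Ω : DiffForm s k} (hΩ : SmoothNear Ω 0) :
    IsFormK s k fun x v => Ω x v :=
  ⟨fun x v i a b c => by simp only [ContinuousAlternatingMap.map_update_add,
      ContinuousAlternatingMap.map_update_smul, smul_eq_mul],
    fun x v ⟨i, j, hij, hv⟩ => (Ω x).map_eq_zero_of_eq v hv hij,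
    fun v => smoothNear_iff_exists_contDiffOn.1 (hΩ.form_apply v)⟩

theorem extDK_eq_extDeriv {B : DiffForm s k} {x : Fin s → ℝ} (hB : DifferentiableAt ℝ B x)
    (v : Fin (k + 1) → Fin s → ℝ) : extDK s k (fun y w => B y w) x v = extDeriv B x v := by
  rw [extDeriv_apply hB]
  refine Finset.sum_congr rfl fun i _ => ?_
  rw [zsmul_eq_mul]
  push_cast
  rfl

theorem zeroARK_iff_zeroRestriction {f : ℝ → Fin s → ℝ} {Ω : DiffForm s (k + 1)} :
    ZeroARK s k (fun x v => Ω x v) f ↔ ZeroRestriction f Ω := by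
  constructor
  · rintro ⟨α, β, hα, hβ, hαf, hβf, hΩ⟩
    have hB := hβ.smoothNear_toDiffForm
    refine ⟨hα.toDiffForm, hβ.toDiffForm, hα.smoothNear_toDiffForm, hB,
      hαf.mono fun t ht => ContinuousAlternatingMap.ext ht,
      hβf.mono fun t ht => ContinuousAlternatingMap.ext ht, ?_⟩
    filter_upwards [hΩ, hB.eventually_differentiableAt] with x hx hBx
    ext v
    exact (hx v).trans (congrArg (α x v + ·) (extDK_eq_extDeriv hBx v))
  · rintro ⟨A, B, hA, hB, hAf, hBf, hΩ⟩
    refine ⟨_, _, isFormK_of_smoothNear hA, isFormK_of_smoothNear hB,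
      hAf.mono fun t ht v => DFunLike.congr_fun ht v,
      hBf.mono fun t ht v => DFunLike.congr_fun ht v, ?_⟩
    filter_upwards [hΩ, hB.eventually_differentiableAt] with x hx hBx v
    rw [hx, extDK_eq_extDeriv hBx]
    rfl

end BundledForms

section QuasiHomogeneousParts

variable {s k : ℕ} {lam : Fin s → ℕ}

theorem sum_taylorTerm_eq_weightedTaylor (hpos : ∀ i, 0 < lam i) {h : (Fin s → ℝ) → ℝ}
    (hh : SmoothNear h 0) (m r : ℕ) (x : Fin s → ℝ) :
    (∑ᶠ α : Fin s → ℕ, if monomialWeight lam α + m = r then taylorTerm s α h x else 0)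
      = if m ≤ r then weightedTaylor lam (r - m) h x else 0 := by
  split_ifs with hm
  · rw [weightedTaylor_eq_sum_taylorTerm hpos hh, finsum_eq_sum_of_support_subset]
    · refine Finset.sum_congr rfl fun α hα => if_pos ?_
      rw [(mem_exponentsOfWeight hpos).1 hα, Nat.sub_add_cancel hm]
    · intro α hα
      refine (mem_exponentsOfWeight hpos).2 (Nat.eq_sub_of_add_eq ?_)
      by_contra hne
      exact hα (if_neg hne)
  · exact finsum_eq_zero_of_forall_eq_zero fun α => if_neg (by omega)

theorem weightedPart_basisTuple (hpos : ∀ i, 0 < lam i) {Ω : DiffForm s k} (hΩ : SmoothNear Ω 0)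
    (r : ℕ) (x : Fin s → ℝ) (I : Fin k → Fin s) :
    weightedPart lam r Ω x (basisTuple I) = if ∑ j, lam (I j) ≤ r then
      weightedTaylor lam (r - ∑ j, lam (I j)) (fun y => Ω y (basisTuple I)) x else 0 := by
  have hslice (τ : ℝ) : pullback (dilation lam τ) Ω x (basisTuple I)
      = τ ^ (∑ j, lam (I j)) • Ω (dilation lam τ x) (basisTuple I) := by
    rw [pullback_dilation_apply, ContinuousAlternatingMap.compContinuousLinearMap_apply,
      ← Finset.prod_pow_eq_pow_sum, ← (Ω _).map_smul_univ]
    exact congrArg _ (funext fun j => dilation_single ..)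
  rw [weightedPart]
  refine (taylorCoeff_clm_comp r (ContinuousAlternatingMap.apply ℝ _ ℝ (basisTuple I))
    (hΩ.pullback_dilation hpos x).slice).symm.trans ?_
  refine (congrArg (taylorCoeff r) (funext hslice)).trans ?_
  exact taylorCoeff_pow_smul r _ ((hΩ.form_apply _).comp_dilation_left hpos x)

theorem IsFormK.qhPartK_eq_weightedPart {α : FormK s k} (hα : IsFormK s k α)
    (hpos : ∀ i, 0 < lam i) (r : ℕ) :
    qhPartK s k lam r α = fun x v => weightedPart lam r hα.toDiffForm x v := by
  classical
  funext x v
  have hΩ := hα.smoothNear_toDiffForm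
  refine Eq.trans ?_ (alternatingMap_apply_eq_sum
    (weightedPart lam r hα.toDiffForm x).toAlternatingMap v).symm
  rw [Finset.sum_filter]
  refine Finset.sum_congr rfl fun I _ => ?_
  have hcoeff := (sum_taylorTerm_eq_weightedTaylor hpos (hΩ.form_apply (basisTuple I))
    (∑ j, lam (I j)) r x).trans (weightedPart_basisTuple hpos hΩ r x I).symm
  split_ifs
  · exact congrArg (· * coordForm I v) hcoeff
  · rfl

end QuasiHomogeneousParts

section MinimalQuasiDegree

variable {s k : ℕ} {lam : Fin s → ℕ} {a : ℝ} {Φ : (Fin s → ℝ) → Fin s → ℝ} {φ : ℝ → ℝ}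
  {Ω₁ Ω₂ : DiffForm s (k + 1)}

/-- `r` is the least quasi-degree in which the part of `Ω` has nonzero restriction to the
monomial curve. -/
def IsLeastQuasiDegree (lam : Fin s → ℕ) (Ω : DiffForm s (k + 1)) (r : ℕ) : Prop :=
  ¬ ZeroRestriction (monomialCurve lam) (weightedPart lam r Ω) ∧
    ∀ q < r, ZeroRestriction (monomialCurve lam) (weightedPart lam q Ω)

theorem IsLeastQuasiDegree.eq_of_pullback {r₁ r₂ : ℕ} (hr₁ : IsLeastQuasiDegree lam Ω₁ r₁)
    (hr₂ : IsLeastQuasiDegree lam Ω₂ r₂) (hpos : ∀ i, 0 < lam i) (hΩ₁ : SmoothNear Ω₁ 0)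
    (hΩ₂ : SmoothNear Ω₂ 0) (hΦ : SmoothNear Φ 0) (hφ : HasDerivAt φ a 0) (ha : a ≠ 0)
    (hφ₀ : φ 0 = 0)
    (hconj : ∀ᶠ t in 𝓝 0, Φ (monomialCurve lam t) = monomialCurve lam (φ t))
    (hsame : ZeroRestriction (monomialCurve lam) (fun x => pullback Φ Ω₁ x - Ω₂ x)) :
    r₁ = r₂ := by
  have hparts {r : ℕ} (hr : r ≤ r₁) := zeroRestriction_weightedPart_sub hpos hΩ₁ hΩ₂ hΦ hφ hφ₀
    hconj hsame (r := r) fun q hq => hr₁.2 q (hq.trans_le hr)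
  obtain hlt | heq | hlt := lt_trichotomy r₁ r₂
  · have hpow_smul := (hr₂.2 r₁ hlt).sub (hparts le_rfl)
    refine absurd ((hpow_smul.const_smul (a ^ r₁)⁻¹).congr (.of_forall fun x => ?_)) hr₁.1
    simp only [sub_sub_cancel, inv_smul_smul₀ (pow_ne_zero r₁ ha)]
  · exact heq
  · have hsum := (hparts hlt.le).add ((hr₁.2 r₂ hlt).const_smul (a ^ r₂))
    exact absurd (hsum.congr (.of_forall fun x => (sub_add_cancel _ _).symm)) hr₂.1

end MinimalQuasiDegree

theorem proportional_minimum_quasiDegree_part_general {s k : ℕ} {lam : Fin s → ℕ}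
    (hpos : ∀ i, 0 < lam i) {ω₁ ω₂ : FormK s (k + 1)} (h₁ : IsFormK s (k + 1) ω₁)
    (h₂ : IsFormK s (k + 1) ω₂) {Φ : (Fin s → ℝ) → Fin s → ℝ} {φ : ℝ → ℝ} {a : ℝ}
    (hΦ : SmoothNear Φ 0) (hφ : HasDerivAt φ a 0) (ha : a ≠ 0) (hφ₀ : φ 0 = 0)
    (hconj : ∀ᶠ t in 𝓝 0, Φ (monomialCurve lam t) = monomialCurve lam (φ t))
    (hsame : SameARK s k (pullK s (k + 1) Φ ω₁) ω₂ (monomialCurve lam)) {r₁ r₂ : ℕ}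
    (hr₁ : ¬ ZeroARK s k (qhPartK s (k + 1) lam r₁ ω₁) (monomialCurve lam) ∧
      ∀ r < r₁, ZeroARK s k (qhPartK s (k + 1) lam r ω₁) (monomialCurve lam))
    (hr₂ : ¬ ZeroARK s k (qhPartK s (k + 1) lam r₂ ω₂) (monomialCurve lam) ∧
      ∀ r < r₂, ZeroARK s k (qhPartK s (k + 1) lam r ω₂) (monomialCurve lam)) :
    r₁ = r₂ ∧ SameARK s k (qhPartK s (k + 1) lam r₁ ω₂)
      (fun x v => a ^ r₁ * qhPartK s (k + 1) lam r₁ ω₁ x v) (monomialCurve lam) := by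
  simp only [h₁.qhPartK_eq_weightedPart hpos, h₂.qhPartK_eq_weightedPart hpos,
    zeroARK_iff_zeroRestriction] at hr₁ hr₂ ⊢
  have hΩ₁ := h₁.smoothNear_toDiffForm
  have hΩ₂ := h₂.smoothNear_toDiffForm
  have hrestriction : ZeroRestriction (monomialCurve lam)
      fun x => pullback Φ h₁.toDiffForm x - h₂.toDiffForm x :=
    zeroARK_iff_zeroRestriction.1 hsame
  exact ⟨IsLeastQuasiDegree.eq_of_pullback hr₁ hr₂ hpos hΩ₁ hΩ₂ hΦ hφ ha hφ₀ hconj hrestriction,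
    zeroARK_iff_zeroRestriction.2
      (zeroRestriction_weightedPart_sub hpos hΩ₁ hΩ₂ hΦ hφ hφ₀ hconj hrestriction hr₁.2)⟩

/-- Diffeomorphic algebraic restrictions of `(k+1)`-forms to the quasi-homogeneous
monomial curve `f(t) = (t^{λ₁},…,t^{λ_s})` have proportional minimum quasi-degree
parts, the factor of proportionality being `(φ'(0))^{r}` where `r` is the common
minimal quasi-degree. -/
theorem proportional_minimum_quasiDegree_part
    (s k : ℕ) (lam : Fin s → ℕ) (hpos : ∀ i, 0 < lam i) (hmono : StrictMono lam)
    (hind : LinIndepNonneg lam)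
    (f : ℝ → Fin s → ℝ) (hf : f = fun t i => t ^ lam i)
    (ω₁ ω₂ : FormK s (k+1)) (h₁ : IsFormK s (k+1) ω₁) (h₂ : IsFormK s (k+1) ω₂)
    (Φ : (Fin s → ℝ) → (Fin s → ℝ)) (φ : ℝ → ℝ)
    (hΦ : IsDiffeoGerm s Φ) (hφ : IsDiffeoGerm1 φ)
    (hconj : ∀ᶠ t in 𝓝 (0 : ℝ), Φ (f t) = f (φ t))
    (hsame : SameARK s k (pullK s (k+1) Φ ω₁) ω₂ f)
    (r₁ r₂ : ℕ)
    (hr₁ : ¬ ZeroARK s k (qhPartK s (k+1) lam r₁ ω₁) f ∧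
      ∀ r < r₁, ZeroARK s k (qhPartK s (k+1) lam r ω₁) f)
    (hr₂ : ¬ ZeroARK s k (qhPartK s (k+1) lam r₂ ω₂) f ∧
      ∀ r < r₂, ZeroARK s k (qhPartK s (k+1) lam r ω₂) f) :
    r₁ = r₂ ∧ ∃ c : ℝ, c ≠ 0 ∧ c = (deriv φ 0) ^ r₁ ∧
      SameARK s k (qhPartK s (k+1) lam r₁ ω₂)
        (fun x v => c * qhPartK s (k+1) lam r₁ ω₁ x v) f := by
  obtain rfl : f = monomialCurve lam := hf
  obtain ⟨hr, hpart⟩ := proportional_minimum_quasiDegree_part_general hpos h₁ h₂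
    (smoothNear_iff_exists_contDiffOn.2 hΦ.2.1)
    (differentiableAt_of_deriv_ne_zero hφ.2.2).hasDerivAt hφ.2.2 hφ.1 hconj hsame hr₁ hr₂
  exact ⟨hr, _, pow_ne_zero r₁ hφ.2.2, rfl, hpart⟩
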